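/- arXiv:math/0609644 — 5 statements merged into one kernel-verified Lean document; each statement's English description precedes it below -/
import Mathlib

section
/- Let Y be a Young diagram of size n ≥ 2 given by b such that every critical point of Y is 2-critical, i.e. for all 1 ≤ y ≤ n−1, b(y+1) > b(y) implies b(y) = y + 2. Then |S_{↘Y}(321)| = |S_{↘Y}(312)|, |S_{↗Y}(321)| = |S_{↗Y}(312)|, and |S_Y(321)| = |S_Y(312)|. -/
/-!
The bottom row of the diagram is peeled off. A transversal of a diagram `Y` of size `n + 1` is a
transversal of the diagram `Y'` obtained by deleting the bottom row, together with the column `t`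
(counted from `0`) in which the bottom dot is inserted. Let the bottom row of `Y` have `B + 1`
cells.

* The result avoids `321` iff the old transversal does and its first `t` entries increase
  (`good321_ins`). Let `runs B v` be the set of such `t ≤ B`.
* The result avoids `312` iff the old transversal does and its first `t` entries lie below the
  entries in columns `t, …, B - 1` (`good312_ins`). Let `splits B v` be the set of such `t ≤ B`.

After an insertion the cardinality `s` of the respective set (taken with `B + 1`) becomes, for the
different choices of `t`, each of `2, …, s + 1` exactly once, for both patterns
(`sum_runs`, `sum_splits`). Hence the distributions of `s` over both kinds of avoiders agree as long
as they agree initially. For `321` the first two entries descend iff `s = 2`. For `312` this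
fails pointwise, but one has a second identity: for every `u ≥ 2`, the avoiders with `s = u`, an
initial ascent and `1 ∉ splits` are equinumerous to those with `s > u` and an initial descent.
It is preserved by the insertion step (`second_step`), and it yields that the `312`-avoiders with
an initial descent are as many as those with `s = 2`.

When `Y` has a critical point at its lowest row, being 2-critical means `B = 2`, so that `s` only
depends on the order of the first two entries; both identities then follow from the equality of the
ascent and descent counts for `Y'` (`agree_two`). The induction invariant is `Agree`.
-/

open Equiv

/-- `π` is a transversal of the Young diagram with row lengths `b` (zero-indexed:
the row at height `h` has `b h` cells, i.e. column `i` (1-indexed `i+1`) lies in that row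
iff `(i:ℕ)+1 ≤ b h`). -/
def IsTransversal {n : ℕ} (b : Fin n → ℕ) (π : Equiv.Perm (Fin n)) : Prop :=
  ∀ i : Fin n, (i : ℕ) + 1 ≤ b (π i)

/-- The transversal `π` contains the pattern `τ` inside the Young diagram `b`:
there are columns `f 0 < f 1 < …` whose dots are in the relative order prescribed by `τ`
and all rows and columns through these dots intersect inside the diagram. -/
def ContainsIn {n k : ℕ} (b : Fin n → ℕ) (π : Equiv.Perm (Fin n))
    (τ : Equiv.Perm (Fin k)) : Prop :=
  ∃ f : Fin k → Fin n, StrictMono f ∧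
    (∀ s t : Fin k, τ s < τ t ↔ π (f s) < π (f t)) ∧
    (∀ s t : Fin k, (f s : ℕ) + 1 ≤ b (π (f t)))

/-- `|S_Y(τ)|`: the number of transversals of the Young diagram `b` avoiding `τ` in `Y`. -/
noncomputable def SYcard {n k : ℕ} (b : Fin n → ℕ) (τ : Equiv.Perm (Fin k)) : ℕ :=
  Nat.card {π : Equiv.Perm (Fin n) // IsTransversal b π ∧ ¬ ContainsIn b π τ}

/-- Classical pattern containment for permutations. -/
def ContainsPat {n k : ℕ} (π : Equiv.Perm (Fin n)) (τ : Equiv.Perm (Fin k)) : Prop :=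
  ∃ f : Fin k → Fin n, StrictMono f ∧ ∀ s t : Fin k, τ s < τ t ↔ π (f s) < π (f t)

/-- `|S_n(τ)|`: the number of permutations of length `n` avoiding `τ`. -/
noncomputable def SnCard (n : ℕ) {k : ℕ} (τ : Equiv.Perm (Fin k)) : ℕ :=
  Nat.card {π : Equiv.Perm (Fin n) // ¬ ContainsPat π τ}

def p123 : Equiv.Perm (Fin 3) := Equiv.refl _
def p213 : Equiv.Perm (Fin 3) :=
  ⟨![1, 0, 2], ![1, 0, 2], by intro x; fin_cases x <;> rfl, by intro x; fin_cases x <;> rfl⟩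
def p312 : Equiv.Perm (Fin 3) :=
  ⟨![2, 0, 1], ![1, 2, 0], by intro x; fin_cases x <;> rfl, by intro x; fin_cases x <;> rfl⟩
def p321 : Equiv.Perm (Fin 3) :=
  ⟨![2, 1, 0], ![2, 1, 0], by intro x; fin_cases x <;> rfl, by intro x; fin_cases x <;> rfl⟩

/-- `(σ|τ)`: the block sum with the block of `σ` before and entirely above the block of `τ`. -/
def blockSum {m k : ℕ} (σ : Equiv.Perm (Fin m)) (τ : Equiv.Perm (Fin k)) :
    Equiv.Perm (Fin (m + k)) :=
  finSumFinEquiv.symm.trans ((((Equiv.sumCongr σ τ).trans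
    (Equiv.sumComm (Fin m) (Fin k))).trans finSumFinEquiv).trans
    (finCongr (Nat.add_comm k m)))

/-- `|S_{↘Y}(τ)|`: avoiders whose two leftmost entries are decreasing. -/
noncomputable def SYcardLeftDesc {m k : ℕ} (b : Fin m → ℕ) (τ : Equiv.Perm (Fin k)) : ℕ :=
  Nat.card {π : Equiv.Perm (Fin m) // IsTransversal b π ∧ ¬ ContainsIn b π τ ∧
    ∀ i j : Fin m, (i : ℕ) = 0 → (j : ℕ) = 1 → π j < π i}

/-- `|S_{↗Y}(τ)|`: avoiders whose two leftmost entries are increasing. -/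
noncomputable def SYcardLeftAsc {m k : ℕ} (b : Fin m → ℕ) (τ : Equiv.Perm (Fin k)) : ℕ :=
  Nat.card {π : Equiv.Perm (Fin m) // IsTransversal b π ∧ ¬ ContainsIn b π τ ∧
    ∀ i j : Fin m, (i : ℕ) = 0 → (j : ℕ) = 1 → π i < π j}

/-- `|S^{↘}_Y(τ)|`: avoiders in which the value `m` occurs to the left of the value `m-1`. -/
noncomputable def SYcardTopDesc {m k : ℕ} (b : Fin m → ℕ) (τ : Equiv.Perm (Fin k)) : ℕ :=
  Nat.card {π : Equiv.Perm (Fin m) // IsTransversal b π ∧ ¬ ContainsIn b π τ ∧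
    ∀ u v : Fin m, (u : ℕ) + 1 = m → (v : ℕ) + 2 = m → π⁻¹ u < π⁻¹ v}

/-- `|S^{↗}_Y(τ)|`: avoiders in which the value `m-1` occurs to the left of the value `m`. -/
noncomputable def SYcardTopAsc {m k : ℕ} (b : Fin m → ℕ) (τ : Equiv.Perm (Fin k)) : ℕ :=
  Nat.card {π : Equiv.Perm (Fin m) // IsTransversal b π ∧ ¬ ContainsIn b π τ ∧
    ∀ u v : Fin m, (u : ℕ) + 1 = m → (v : ℕ) + 2 = m → π⁻¹ v < π⁻¹ u}

/-! ### Inserting a bottom row -/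

/-- A permutation of `Fin n` as a function on `ℕ`, extended by the identity. -/
def toN {n : ℕ} (π : Equiv.Perm (Fin n)) (i : ℕ) : ℕ :=
  if h : i < n then (π ⟨i, h⟩ : ℕ) else i

/-- Insert a new smallest entry `0` at position `t`, raising all other entries by one. -/
def ins (t : ℕ) (v : ℕ → ℕ) (i : ℕ) : ℕ :=
  if i < t then v i + 1 else if i = t then 0 else v (i - 1) + 1

lemma toN_lt {n : ℕ} (π : Equiv.Perm (Fin n)) {i : ℕ} (h : i < n) : toN π i < n := by
  simp [toN, h]

lemma toN_ne {n : ℕ} (π : Equiv.Perm (Fin n)) {i j : ℕ} (hi : i < n) (hj : j < n)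
    (hij : i ≠ j) : toN π i ≠ toN π j := by
  simp [toN, hi, hj, ← Fin.ext_iff, hij]

/-- Insertion of a smallest entry on the level of permutations. -/
def insPerm {n : ℕ} (p : Fin (n + 1) × Equiv.Perm (Fin n)) : Equiv.Perm (Fin (n + 1)) :=
  ((finSuccEquiv' p.1).trans (Equiv.optionCongr p.2)).trans (finSuccEquiv' 0).symm

lemma insPerm_self {n : ℕ} (p : Fin (n + 1) × Equiv.Perm (Fin n)) : insPerm p p.1 = 0 := by
  simp [insPerm]

lemma insPerm_bijective (n : ℕ) : Function.Bijective (insPerm (n := n)) := by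
  rw [Fintype.bijective_iff_injective_and_card]
  constructor
  · rintro ⟨t, π⟩ ⟨t', π'⟩ h
    have h1 : t = t' := by
      apply (insPerm (t', π')).injective
      rw [insPerm_self (t', π'), ← h, insPerm_self (t, π)]
    subst h1
    congr 1
    ext i
    have := DFunLike.congr_fun h (t.succAbove i)
    simpa [insPerm, Fin.ext_iff] using this
  · simp [Fintype.card_perm, Nat.factorial_succ]

lemma toN_insPerm {n : ℕ} (t : Fin (n + 1)) (π : Equiv.Perm (Fin n)) :
    toN (insPerm (t, π)) = ins t (toN π) := by
  funext i
  rcases lt_trichotomy i t with h | h | h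
  · have hn : i < n := by omega
    have e : (⟨i, by omega⟩ : Fin (n + 1)) = t.succAbove ⟨i, hn⟩ := by
      rw [Fin.succAbove_of_castSucc_lt _ _ (by simpa [Fin.lt_def] using h)]; rfl
    simp only [toN, ins, h, hn, show i < n + 1 by omega, dif_pos, if_pos, e]
    simp [insPerm]
  · subst h
    have := insPerm_self (t, π)
    simp only at this
    simp [toN, ins, this, t.2]
  · by_cases hn : i < n + 1
    · have e : (⟨i, hn⟩ : Fin (n + 1)) = t.succAbove ⟨i - 1, by omega⟩ := by
        rw [Fin.succAbove_of_le_castSucc _ _ (by simp [Fin.le_def]; omega)]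
        ext; simp; omega
      simp only [toN, ins, hn, show ¬ i < t by omega, show i ≠ t by omega,
        show i - 1 < n by omega, dif_pos, if_false, e]
      simp [insPerm]
    · simp only [toN, ins, hn, show ¬ i < t by omega, show i ≠ t by omega,
        show ¬ i - 1 < n by omega, dif_neg, if_false, not_false_eq_true]
      omega

open Classical in
/-- The sum of the weights `f` over all permutations of size `n` with property `P`. -/
noncomputable def wsum (n : ℕ) (P : (ℕ → ℕ) → Prop) (f : (ℕ → ℕ) → ℕ) : ℕ :=
  ∑ π : Equiv.Perm (Fin n), if P (toN π) then f (toN π) else 0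

lemma wsum_congr {n : ℕ} {P : (ℕ → ℕ) → Prop} {f g : (ℕ → ℕ) → ℕ}
    (h : ∀ π : Equiv.Perm (Fin n), f (toN π) = g (toN π)) : wsum n P f = wsum n P g := by
  simp only [wsum, h]

lemma wsum_add (n : ℕ) (P : (ℕ → ℕ) → Prop) (f g : (ℕ → ℕ) → ℕ) :
    wsum n P (fun v => f v + g v) = wsum n P f + wsum n P g := by
  classical
  simp only [wsum, ← Finset.sum_add_distrib]
  refine Finset.sum_congr rfl fun π _ => ?_
  split_ifs <;> simp

lemma wsum_mul (n : ℕ) (P : (ℕ → ℕ) → Prop) (c : ℕ) (f : (ℕ → ℕ) → ℕ) :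
    wsum n P (fun v => c * f v) = c * wsum n P f := by
  classical
  simp only [wsum, Finset.mul_sum]
  refine Finset.sum_congr rfl fun π _ => ?_
  split_ifs <;> simp

/-- If `P` holds after inserting at `t` exactly when `t` is an allowed position `t ∈ T v` and `Q`
held before, then a `P`-sum is a `Q`-sum over all allowed insertions. -/
lemma wsum_step {n : ℕ} {P Q : (ℕ → ℕ) → Prop} {T : (ℕ → ℕ) → Finset ℕ}
    (hT : ∀ v, ∀ t ∈ T v, t ≤ n)
    (h : ∀ (π : Equiv.Perm (Fin n)) (t : ℕ), t ≤ n →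
      (P (ins t (toN π)) ↔ t ∈ T (toN π) ∧ Q (toN π))) (f : (ℕ → ℕ) → ℕ) :
    wsum (n + 1) P f = wsum n Q (fun v => ∑ t ∈ T v, f (ins t v)) := by
  classical
  unfold wsum
  rw [← (insPerm_bijective n).sum_comp, Fintype.sum_prod_type_right]
  refine Finset.sum_congr rfl fun π _ => ?_
  simp only [toN_insPerm]
  rw [Fin.sum_univ_eq_sum_range
    (fun t => if P (ins t (toN π)) then f (ins t (toN π)) else 0) (n + 1)]
  rw [Finset.sum_congr rfl (g := fun t => if t ∈ T (toN π) then
    (if Q (toN π) then f (ins t (toN π)) else 0) else 0)]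
  · rw [← Finset.sum_filter, Finset.filter_mem_eq_inter, Finset.inter_eq_right.2]
    · split_ifs <;> simp
    · intro t ht
      have := hT _ t ht
      simp; omega
  · intro t ht
    rw [Finset.mem_range] at ht
    have := h π t (by omega)
    by_cases h1 : t ∈ T (toN π) <;> by_cases h2 : Q (toN π) <;> simp [this, h1, h2]

/-! ### Avoidance under insertion -/

/-- `v` is a `321`-avoiding transversal of the diagram of size `n` with row lengths `b`. -/
def Good321 (n : ℕ) (b v : ℕ → ℕ) : Prop :=
  (∀ i < n, i < b (v i)) ∧
    ∀ i j k, i < j → j < k → k < n → v j < v i → v k < v j → ¬ k < b (v k)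

/-- `v` is a `312`-avoiding transversal of the diagram of size `n` with row lengths `b`. -/
def Good312 (n : ℕ) (b v : ℕ → ℕ) : Prop :=
  (∀ i < n, i < b (v i)) ∧
    ∀ i j k, i < j → j < k → k < n → v j < v k → v k < v i → ¬ k < b (v j)

/-- Row lengths after deleting the bottom row and any column meeting it. -/
def tailDiag (b : ℕ → ℕ) (i : ℕ) : ℕ := b (i + 1) - 1

open Classical in
/-- The `t ≤ B` such that the first `t` entries of `v` increase. -/
noncomputable def runs (B : ℕ) (v : ℕ → ℕ) : Finset ℕ :=
  (Finset.range (B + 1)).filter fun t => ∀ i j, i < j → j < t → v i < v j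

open Classical in
/-- The `t ≤ B` such that the first `t` entries of `v` are all below the entries at positions
`t, …, B - 1`. -/
noncomputable def splits (B : ℕ) (v : ℕ → ℕ) : Finset ℕ :=
  (Finset.range (B + 1)).filter fun t => ∀ i j, i < t → t ≤ j → j < B → v i < v j

lemma mem_runs {B t : ℕ} {v : ℕ → ℕ} :
    t ∈ runs B v ↔ t ≤ B ∧ ∀ i j, i < j → j < t → v i < v j := by
  simp [runs]

lemma mem_splits {B t : ℕ} {v : ℕ → ℕ} :
    t ∈ splits B v ↔ t ≤ B ∧ ∀ i j, i < t → t ≤ j → j < B → v i < v j := by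
  simp [splits]

lemma ins_lt {t i : ℕ} (v : ℕ → ℕ) (h : i < t) : ins t v i = v i + 1 := by simp [ins, h]

lemma ins_self (t : ℕ) (v : ℕ → ℕ) : ins t v t = 0 := by simp [ins]

lemma ins_succ {t i : ℕ} (v : ℕ → ℕ) (h : t ≤ i) : ins t v (i + 1) = v i + 1 := by
  simp [ins, show ¬ i + 1 < t by omega, show i + 1 ≠ t by omega]

/-- Every position other than `t` carries an old entry. -/
lemma ins_cases (t i : ℕ) (v : ℕ → ℕ) :
    (i < t ∧ ins t v i = v i + 1) ∨ (i = t ∧ ins t v i = 0) ∨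
      (∃ i', i = i' + 1 ∧ t ≤ i' ∧ ins t v i = v i' + 1) := by
  rcases lt_trichotomy i t with h | h | h
  · exact Or.inl ⟨h, ins_lt v h⟩
  · exact Or.inr (Or.inl ⟨h, by rw [h, ins_self]⟩)
  · obtain ⟨i', rfl⟩ : ∃ i', i = i' + 1 := ⟨i - 1, by omega⟩
    exact Or.inr (Or.inr ⟨i', rfl, by omega, ins_succ v (by omega)⟩)

/-- The new position of the entry that was at position `i` before the insertion at `t`. -/
lemma ins_up (t : ℕ) (v : ℕ → ℕ) (i : ℕ) :
    ins t v (if i < t then i else i + 1) = v i + 1 := by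
  split_ifs with h
  · exact ins_lt v h
  · exact ins_succ v (by omega)

lemma transversal_ins {n B t : ℕ} {b v : ℕ → ℕ} (hv : ∀ i < n, v i < n) (hb0 : b 0 = B + 1)
    (hmono : ∀ i ≤ n, b 0 ≤ b i) (ht : t ≤ n) :
    (∀ i < n + 1, i < b (ins t v i)) ↔ t ≤ B ∧ ∀ i < n, i < tailDiag b (v i) := by
  unfold tailDiag
  constructor
  · intro h
    have h1 := h t (by omega)
    rw [ins_self] at h1
    refine ⟨by omega, fun i hi => ?_⟩
    have h2 := h (if i < t then i else i + 1) (by split_ifs <;> omega)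
    rw [ins_up] at h2
    have := hmono (v i + 1) (hv i hi)
    split_ifs at h2 <;> omega
  · rintro ⟨h1, h2⟩ i hi
    rcases ins_cases t i v with ⟨h, e⟩ | ⟨h, e⟩ | ⟨i', rfl, h, e⟩
    · have := hmono (v i + 1) (hv i (by omega))
      rw [e]; omega
    · rw [e]; omega
    · have := h2 i' (by omega)
      rw [e]; omega

lemma good321_ins {n B t : ℕ} {b v : ℕ → ℕ} (hv : ∀ i < n, v i < n)
    (hinj : ∀ i < n, ∀ j < n, i ≠ j → v i ≠ v j) (hb0 : b 0 = B + 1)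
    (hmono : ∀ i ≤ n, b 0 ≤ b i) (ht : t ≤ n) :
    Good321 (n + 1) b (ins t v) ↔ t ∈ runs B v ∧ Good321 n (tailDiag b) v := by
  rw [Good321, Good321, transversal_ins hv hb0 hmono ht, mem_runs]
  constructor
  · rintro ⟨⟨h1, h2⟩, h3⟩
    refine ⟨⟨h1, fun i j hij hjt => ?_⟩, h2, fun i j k hij hjk hk hji hkj hkb => ?_⟩
    · by_contra hlt
      have hne := hinj i (by omega) j (by omega) (by omega)
      refine h3 i j t hij hjt (by omega) ?_ ?_ ?_
      · rw [ins_lt v hjt, ins_lt v (by omega)]; omega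
      · rw [ins_lt v hjt, ins_self]; omega
      · rw [ins_self]; omega
    · refine h3 (if i < t then i else i + 1) (if j < t then j else j + 1)
        (if k < t then k else k + 1) (by split_ifs <;> omega) (by split_ifs <;> omega)
        (by split_ifs <;> omega) ?_ ?_ ?_
      · simp only [ins_up]; omega
      · simp only [ins_up]; omega
      · rw [ins_up]
        unfold tailDiag at hkb
        split_ifs <;> omega
  · rintro ⟨⟨h1, h4⟩, h2, h3⟩
    refine ⟨⟨h1, h2⟩, fun i j k hij hjk hk hji hkj hkb => ?_⟩
    -- the two upper entries of the occurrence are positive, hence old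
    rcases ins_cases t i v with ⟨hi, ei⟩ | ⟨hi, ei⟩ | ⟨i', rfl, hi, ei⟩ <;>
    rcases ins_cases t j v with ⟨hj, ej⟩ | ⟨hj, ej⟩ | ⟨j', rfl, hj, ej⟩ <;>
    rcases ins_cases t k v with ⟨hk', ek⟩ | ⟨hk', ek⟩ | ⟨k', rfl, hk', ek⟩ <;>
    rw [ei, ej] at hji <;> rw [ej, ek] at hkj <;> rw [ek] at hkb <;> try omega
    · have := hmono (v k + 1) (hv k (by omega))
      exact h3 i j k hij hjk (by omega) (by omega) (by omega) (by unfold tailDiag; omega)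
    · have := h4 i j hij hj
      omega
    · exact h3 i j k' hij (by omega) (by omega) (by omega) (by omega)
        (by unfold tailDiag; omega)
    · exact h3 i j' k' (by omega) (by omega) (by omega) (by omega) (by omega)
        (by unfold tailDiag; omega)
    · exact h3 i' j' k' (by omega) (by omega) (by omega) (by omega) (by omega)
        (by unfold tailDiag; omega)

lemma good312_ins {n B t : ℕ} {b v : ℕ → ℕ} (hv : ∀ i < n, v i < n)
    (hinj : ∀ i < n, ∀ j < n, i ≠ j → v i ≠ v j) (hb0 : b 0 = B + 1) (hB : B ≤ n)
    (hmono : ∀ i ≤ n, b 0 ≤ b i) (ht : t ≤ n) :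
    Good312 (n + 1) b (ins t v) ↔ t ∈ splits B v ∧ Good312 n (tailDiag b) v := by
  rw [Good312, Good312, transversal_ins hv hb0 hmono ht, mem_splits]
  constructor
  · rintro ⟨⟨h1, h2⟩, h3⟩
    refine ⟨⟨h1, fun i j hit htj hjB => ?_⟩, h2, fun i j k hij hjk hk hji hkj hkb => ?_⟩
    · by_contra hlt
      have hne := hinj i (by omega) j (by omega) (by omega)
      refine h3 i t (j + 1) hit (by omega) (by omega) ?_ ?_ ?_
      · rw [ins_succ v htj, ins_self]; omega
      · rw [ins_succ v htj, ins_lt v hit]; omega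
      · rw [ins_self]; omega
    · refine h3 (if i < t then i else i + 1) (if j < t then j else j + 1)
        (if k < t then k else k + 1) (by split_ifs <;> omega) (by split_ifs <;> omega)
        (by split_ifs <;> omega) ?_ ?_ ?_
      · simp only [ins_up]; omega
      · simp only [ins_up]; omega
      · rw [ins_up]
        unfold tailDiag at hkb
        split_ifs <;> omega
  · rintro ⟨⟨h1, h4⟩, h2, h3⟩
    refine ⟨⟨h1, h2⟩, fun i j k hij hjk hk hji hkj hkb => ?_⟩
    -- only the lowest entry of the occurrence, at `j`, can be the new one
    rcases ins_cases t i v with ⟨hi, ei⟩ | ⟨hi, ei⟩ | ⟨i', rfl, hi, ei⟩ <;>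
    rcases ins_cases t j v with ⟨hj, ej⟩ | ⟨hj, ej⟩ | ⟨j', rfl, hj, ej⟩ <;>
    rcases ins_cases t k v with ⟨hk', ek⟩ | ⟨hk', ek⟩ | ⟨k', rfl, hk', ek⟩ <;>
    rw [ej, ek] at hji <;> rw [ei, ek] at hkj <;> rw [ej] at hkb <;> try omega
    · have := hmono (v j + 1) (hv j (by omega))
      exact h3 i j k hij hjk (by omega) (by omega) (by omega) (by unfold tailDiag; omega)
    · exact h3 i j k' hij (by omega) (by omega) (by omega) (by omega)
        (by unfold tailDiag; omega)
    · have := h4 i k' hi hk' (by omega)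
      omega
    · exact h3 i j' k' (by omega) (by omega) (by omega) (by omega) (by omega)
        (by unfold tailDiag; omega)
    · exact h3 i' j' k' (by omega) (by omega) (by omega) (by omega) (by omega)
        (by unfold tailDiag; omega)

/-! ### The statistics under insertion -/

/-- `φ 2 + φ 3 + ⋯ + φ (k + 1)`. -/
def psum (φ : ℕ → ℕ) (k : ℕ) : ℕ := ∑ j ∈ Finset.range k, φ (j + 2)

lemma psum_succ (φ : ℕ → ℕ) (k : ℕ) : psum φ (k + 1) = psum φ k + φ (k + 2) :=
  Finset.sum_range_succ _ _

/-- As `t` runs over `S`, the number of elements `≥ t` of `S` takes each value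
`1, …, |S|` once. -/
lemma sum_rank (φ : ℕ → ℕ) (S : Finset ℕ) :
    ∑ t ∈ S, φ ((S.filter (t ≤ ·)).card + 1) = psum φ S.card := by
  induction S using Finset.induction_on_min with
  | empty => simp [psum]
  | insert a S ha ih =>
    have haS : a ∉ S := fun h => lt_irrefl _ (ha a h)
    rw [Finset.sum_insert haS, Finset.card_insert_of_notMem haS, psum_succ, ← ih, add_comm]
    congr 1
    · refine Finset.sum_congr rfl fun t ht => ?_
      rw [Finset.filter_insert, if_neg (by have := ha t ht; omega)]
    · rw [Finset.filter_true_of_mem, Finset.card_insert_of_notMem haS]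
      intro u hu
      rcases Finset.mem_insert.1 hu with rfl | hu
      · exact le_rfl
      · exact (ha u hu).le

/-- `sum_rank` restricted to the elements `≥ m`. -/
lemma sum_rank_ge (φ : ℕ → ℕ) (S : Finset ℕ) (m : ℕ) :
    ∑ t ∈ S, (if m ≤ t then φ ((S.filter (t ≤ ·)).card + 1) else 0) =
      psum φ (S.filter (m ≤ ·)).card := by
  rw [← sum_rank, ← Finset.sum_filter]
  refine Finset.sum_congr rfl fun t ht => ?_
  rw [Finset.filter_filter]
  have h1 := (Finset.mem_filter.1 ht).2
  rw [Finset.filter_congr (q := fun u => m ≤ u ∧ t ≤ u) fun u _ =>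
    ⟨fun h => ⟨h1.trans h, h⟩, And.right⟩]

lemma zero_mem_splits (B : ℕ) (v : ℕ → ℕ) : 0 ∈ splits B v := by
  rw [mem_splits]; exact ⟨by omega, fun i j h => by omega⟩

lemma top_mem_splits (B : ℕ) (v : ℕ → ℕ) : B ∈ splits B v := by
  rw [mem_splits]; exact ⟨le_rfl, fun i j _ _ _ => by omega⟩

lemma splits_ins {B t : ℕ} (v : ℕ → ℕ) (ht : t ≤ B) :
    splits (B + 1) (ins t v) = insert 0 (((splits B v).filter (t ≤ ·)).image Nat.succ) := by
  ext u
  simp only [Finset.mem_insert, Finset.mem_image, Finset.mem_filter]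
  constructor
  · intro h
    rcases Nat.eq_zero_or_pos u with h0 | h0
    · exact Or.inl h0
    · rw [mem_splits] at h
      have htu : t < u := by
        by_contra hlt
        have := h.2 0 t h0 (by omega) (by omega)
        rw [ins_self] at this
        omega
      refine Or.inr ⟨u - 1, ⟨?_, by omega⟩, by simp; omega⟩
      rw [mem_splits]
      refine ⟨by omega, fun i j hi hj hjB => ?_⟩
      have := h.2 (if i < t then i else i + 1) (j + 1) (by split_ifs <;> omega) (by omega)
        (by omega)
      rw [ins_up, ins_succ v (by omega)] at this
      omega
  · rintro (rfl | ⟨u, ⟨hu, htu⟩, rfl⟩)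
    · exact zero_mem_splits _ _
    · rw [mem_splits] at hu ⊢
      refine ⟨by simp; omega, fun i j hi hj hjB => ?_⟩
      obtain ⟨j, rfl⟩ : ∃ j', j = j' + 1 := ⟨j - 1, by simp at hj; omega⟩
      simp only [Nat.succ_eq_add_one] at hi hj
      rw [ins_succ v (by omega)]
      rcases ins_cases t i v with ⟨h, e⟩ | ⟨h, e⟩ | ⟨i', rfl, h, e⟩ <;> rw [e]
      · have := hu.2 i j (by omega) (by omega) (by omega)
        omega
      · omega
      · have := hu.2 i' j (by omega) (by omega) (by omega)
        omega

lemma card_splits_ins {B t : ℕ} (v : ℕ → ℕ) (ht : t ≤ B) :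
    (splits (B + 1) (ins t v)).card = ((splits B v).filter (t ≤ ·)).card + 1 := by
  rw [splits_ins v ht, Finset.card_insert_of_notMem (by simp),
    Finset.card_image_of_injective _ Nat.succ_injective]

lemma sum_splits (φ : ℕ → ℕ) (B : ℕ) (v : ℕ → ℕ) :
    ∑ t ∈ splits B v, φ (splits (B + 1) (ins t v)).card = psum φ (splits B v).card := by
  rw [← sum_rank]
  refine Finset.sum_congr rfl fun t ht => ?_
  rw [card_splits_ins v (mem_splits.1 ht).1]

/-- The first `t` entries increase for exactly the `t` up to some bound. -/
lemma runs_eq_range (B : ℕ) (v : ℕ → ℕ) : runs B v = Finset.range (runs B v).card := by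
  have hdown : ∀ t ∈ runs B v, ∀ u ≤ t, u ∈ runs B v := by
    intro t ht u hu
    rw [mem_runs] at ht ⊢
    exact ⟨by omega, fun i j hij hj => ht.2 i j hij (by omega)⟩
  symm
  apply Finset.eq_of_subset_of_card_le
  · intro u hu
    by_contra hn
    have hsub : runs B v ⊆ Finset.range u := by
      intro t ht
      rw [Finset.mem_range]
      by_contra hlt
      exact hn (hdown t ht u (by omega))
    have := Finset.card_le_card hsub
    simp at this hu
    omega
  · simp

lemma zero_mem_runs (B : ℕ) (v : ℕ → ℕ) : 0 ∈ runs B v := by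
  rw [mem_runs]; exact ⟨by omega, fun i j _ h => by omega⟩

lemma card_runs_ins_zero (B : ℕ) (v : ℕ → ℕ) :
    (runs (B + 1) (ins 0 v)).card = (runs B v).card + 1 := by
  have : runs (B + 1) (ins 0 v) = insert 0 ((runs B v).image Nat.succ) := by
    ext u
    simp only [Finset.mem_insert, Finset.mem_image]
    constructor
    · intro h
      rcases Nat.eq_zero_or_pos u with h0 | h0
      · exact Or.inl h0
      · refine Or.inr ⟨u - 1, ?_, by simp; omega⟩
        rw [mem_runs] at h ⊢
        refine ⟨by omega, fun i j hij hj => ?_⟩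
        have := h.2 (i + 1) (j + 1) (by omega) (by omega)
        rw [ins_succ v (by omega), ins_succ v (by omega)] at this
        omega
    · rintro (rfl | ⟨u, hu, rfl⟩)
      · exact zero_mem_runs _ _
      · rw [mem_runs] at hu ⊢
        refine ⟨by simp; omega, fun i j hij hj => ?_⟩
        obtain ⟨j, rfl⟩ : ∃ j', j = j' + 1 := ⟨j - 1, by omega⟩
        rw [ins_succ v (by omega)]
        rcases ins_cases 0 i v with ⟨h, e⟩ | ⟨h, e⟩ | ⟨i', rfl, h, e⟩ <;> rw [e]
        · omega
        · omega
        · have := hu.2 i' j (by omega) (by simp at hj; omega)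
          omega
  rw [this, Finset.card_insert_of_notMem (by simp),
    Finset.card_image_of_injective _ Nat.succ_injective]

lemma card_runs_ins_pos {B t : ℕ} {v : ℕ → ℕ} (ht : t ∈ runs B v) (h0 : 0 < t) :
    (runs (B + 1) (ins t v)).card = t + 1 := by
  have : runs (B + 1) (ins t v) = Finset.range (t + 1) := by
    rw [mem_runs] at ht
    ext u
    rw [mem_runs, Finset.mem_range]
    constructor
    · intro h
      by_contra hlt
      have := h.2 0 t h0 (by omega)
      rw [ins_self] at this
      omega
    · intro hu
      refine ⟨by omega, fun i j hij hj => ?_⟩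
      rw [ins_lt v (by omega), ins_lt v (by omega)]
      have := ht.2 i j hij (by omega)
      omega
  rw [this, Finset.card_range]

lemma sum_runs (φ : ℕ → ℕ) (B : ℕ) (v : ℕ → ℕ) :
    ∑ t ∈ runs B v, φ (runs (B + 1) (ins t v)).card = psum φ (runs B v).card := by
  obtain ⟨s, hs⟩ : ∃ s, (runs B v).card = s + 1 :=
    ⟨(runs B v).card - 1, by
      have := Finset.card_pos.2 ⟨0, zero_mem_runs B v⟩
      omega⟩
  have hr := runs_eq_range B v
  rw [hs] at hr
  rw [Finset.sum_congr hr (g := fun t => if t = 0 then φ (s + 2) else φ (t + 1)),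
    Finset.sum_range_succ', hs, psum_succ]
  · simp [psum]
  · intro t ht
    split_ifs with h
    · rw [h, card_runs_ins_zero, hs]
    · rw [card_runs_ins_pos (hr ▸ ht) (by omega)]

/-! ### The two identities and the induction -/

lemma one_mem_splits_ins {B t : ℕ} (v : ℕ → ℕ) (ht : t ≤ B) :
    1 ∈ splits (B + 1) (ins t v) ↔ t = 0 := by
  rw [splits_ins v ht]
  simp only [Finset.mem_insert, Finset.mem_image, Finset.mem_filter]
  constructor
  · rintro (h | ⟨u, ⟨_, h⟩, h'⟩)
    · omega
    · simp at h'; omega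
  · rintro rfl
    exact Or.inr ⟨0, ⟨zero_mem_splits _ _, le_rfl⟩, rfl⟩

lemma asc_ins (t : ℕ) (v : ℕ → ℕ) :
    ins t v 0 < ins t v 1 ↔ t = 0 ∨ (2 ≤ t ∧ v 0 < v 1) := by
  rcases t with _ | _ | t
  · simp [ins]
  · simp [ins]
  · simp [ins]

open Classical in
/-- The weight `φ s` on the `v` with an initial ascent and `1 ∉ splits B v`,
where `s = |splits B v|`. -/
noncomputable def ascWeight (φ : ℕ → ℕ) (B : ℕ) (v : ℕ → ℕ) : ℕ :=
  if 1 ∉ splits B v ∧ v 0 < v 1 then φ (splits B v).card else 0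

open Classical in
/-- The weight `φ 2 + ⋯ + φ (s - 1)` on the `v` with an initial descent,
where `s = |splits B v|`. -/
noncomputable def descWeight (φ : ℕ → ℕ) (B : ℕ) (v : ℕ → ℕ) : ℕ :=
  if v 0 < v 1 then 0 else psum φ ((splits B v).card - 2)

open Classical in
/-- Indicator of an initial descent; the descent is written as a failing ascent, which is the same
for the injective `v` considered here. -/
noncomputable def descInd (v : ℕ → ℕ) : ℕ := if v 0 < v 1 then 0 else 1

open Classical in
/-- Indicator of an initial ascent. -/
noncomputable def ascInd (v : ℕ → ℕ) : ℕ := if v 0 < v 1 then 1 else 0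

lemma card_filter_one_le (B : ℕ) (v : ℕ → ℕ) :
    ((splits B v).filter (1 ≤ ·)).card + 1 = (splits B v).card := by
  have : (splits B v).filter (1 ≤ ·) = (splits B v).erase 0 := by
    ext u
    rw [Finset.mem_filter, Finset.mem_erase, and_comm, Nat.one_le_iff_ne_zero]
  rw [this, Finset.card_erase_add_one (zero_mem_splits B v)]

lemma card_filter_two_le {B : ℕ} {v : ℕ → ℕ} (h : 1 ∈ splits B v) :
    ((splits B v).filter (2 ≤ ·)).card + 2 = (splits B v).card := by
  have : (splits B v).filter (2 ≤ ·) = ((splits B v).filter (1 ≤ ·)).erase 1 := by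
    ext u
    simp only [Finset.mem_filter, Finset.mem_erase]
    constructor
    · rintro ⟨h1, h2⟩; exact ⟨by omega, h1, by omega⟩
    · rintro ⟨h1, h2, h3⟩; exact ⟨h2, by omega⟩
  have h2 := card_filter_one_le B v
  have h3 : 1 ∈ (splits B v).filter (1 ≤ ·) := by simp [h]
  rw [this]
  have := Finset.card_erase_add_one h3
  omega

lemma filter_two_eq {B : ℕ} {v : ℕ → ℕ} (h : 1 ∉ splits B v) :
    (splits B v).filter (2 ≤ ·) = (splits B v).filter (1 ≤ ·) := by
  ext u
  simp only [Finset.mem_filter, and_congr_right_iff]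
  intro hu
  have : u ≠ 1 := fun e => h (e ▸ hu)
  omega

lemma asc_of_one_mem {B : ℕ} {v : ℕ → ℕ} (hB : 2 ≤ B) (h : 1 ∈ splits B v) : v 0 < v 1 :=
  (mem_splits.1 h).2 0 1 (by omega) le_rfl (by omega)

lemma two_le_card_splits {B : ℕ} (v : ℕ → ℕ) (hB : 2 ≤ B) : 2 ≤ (splits B v).card := by
  rw [← Finset.card_pair (show (0 : ℕ) ≠ B by omega)]
  apply Finset.card_le_card
  intro u hu
  simp only [Finset.mem_insert, Finset.mem_singleton] at hu
  rcases hu with rfl | rfl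
  · exact zero_mem_splits _ _
  · exact top_mem_splits _ _

lemma psum_psum (φ : ℕ → ℕ) (k : ℕ) :
    psum (fun s => psum φ (s - 2)) (k + 1) = psum (fun s => psum φ (s - 1)) k := by
  unfold psum
  rw [Finset.sum_range_succ']
  simp

/-- Effect of an insertion on `ascWeight`. The transition splits into a part coming from `v` with
`1 ∈ splits B v`, common to `ascWeight` and `descWeight`, and an `ascWeight` of `v`. -/
lemma sum_ascWeight (φ : ℕ → ℕ) {B : ℕ} (v : ℕ → ℕ) :
    ∑ t ∈ splits B v, ascWeight φ (B + 1) (ins t v) =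
      (if 1 ∈ splits B v ∧ v 0 < v 1 then psum φ ((splits B v).card - 2) else 0) +
        ascWeight (fun s => psum φ (s - 1)) B v := by
  classical
  have h1 : ∑ t ∈ splits B v, ascWeight φ (B + 1) (ins t v) =
      if v 0 < v 1 then psum φ ((splits B v).filter (2 ≤ ·)).card else 0 := by
    rw [← sum_rank_ge]
    split_ifs with hA
    · refine Finset.sum_congr rfl fun t ht => ?_
      have ht' := (mem_splits.1 ht).1
      simp only [ascWeight, one_mem_splits_ins v ht', asc_ins, card_splits_ins v ht', hA, and_true]
      by_cases h2 : 2 ≤ t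
      · simp [h2, show t ≠ 0 by omega]
      · simp only [h2, or_false, if_false]
        rw [if_neg (by tauto)]
    · refine Finset.sum_eq_zero fun t ht => ?_
      have ht' := (mem_splits.1 ht).1
      simp only [ascWeight, one_mem_splits_ins v ht', asc_ins, hA, and_false, or_false]
      rw [if_neg (by tauto)]
  rw [h1]
  have h3 := card_filter_one_le B v
  by_cases hA : v 0 < v 1 <;> by_cases h : 1 ∈ splits B v <;> simp only [ascWeight, hA, h]
  · have h4 := card_filter_two_le h
    simp [← h4]
  · rw [filter_two_eq h]
    simp [← h3]
  · simp
  · simp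

/-- Effect of an insertion on `descWeight`, in the same form as `sum_ascWeight`. -/
lemma sum_descWeight (φ : ℕ → ℕ) {B : ℕ} (hB : 2 ≤ B) (v : ℕ → ℕ) :
    ∑ t ∈ splits B v, descWeight φ (B + 1) (ins t v) =
      (if 1 ∈ splits B v ∧ v 0 < v 1 then psum φ ((splits B v).card - 2) else 0) +
        descWeight (fun s => psum φ (s - 1)) B v := by
  classical
  have h3 := card_filter_one_le B v
  have h5 := two_le_card_splits v hB
  by_cases hA : v 0 < v 1
  · have h1 : ∑ t ∈ splits B v, descWeight φ (B + 1) (ins t v) =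
        ∑ t ∈ splits B v, if t = 1 then psum φ ((splits B v).card - 2) else 0 := by
      refine Finset.sum_congr rfl fun t ht => ?_
      have ht' := (mem_splits.1 ht).1
      simp only [descWeight, asc_ins, hA, and_true, card_splits_ins v ht']
      by_cases h1 : t = 1
      · subst h1
        simp [h3]
      · rw [if_pos (by omega), if_neg h1]
    rw [h1]
    simp [descWeight, hA]
  · have h1 : 1 ∉ splits B v := fun h => hA (asc_of_one_mem hB h)
    obtain ⟨k, hk⟩ : ∃ k, (splits B v).card = k + 2 := ⟨(splits B v).card - 2, by omega⟩
    have h2 : ∑ t ∈ splits B v, descWeight φ (B + 1) (ins t v) =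
        psum (fun s => psum φ (s - 2)) ((splits B v).filter (1 ≤ ·)).card := by
      rw [← sum_rank_ge]
      refine Finset.sum_congr rfl fun t ht => ?_
      have ht' := (mem_splits.1 ht).1
      simp only [descWeight, asc_ins, hA, and_false, or_false, card_splits_ins v ht']
      by_cases h0 : t = 0
      · simp [h0]
      · rw [if_neg h0, if_pos (by omega)]
    rw [h2, show ((splits B v).filter (1 ≤ ·)).card = k + 1 by omega, psum_psum]
    simp [descWeight, hA, hk]

/-- The invariant: for the size-`n` permutations with property `P` (`321`-avoiders) and
`Q` (`312`-avoiders), the cardinalities of `runs B` and of `splits B` are equidistributed, and on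
`Q` the auxiliary identity between initial ascents and initial descents holds. -/
def Agree (n B : ℕ) (P Q : (ℕ → ℕ) → Prop) : Prop :=
  (∀ φ : ℕ → ℕ, wsum n P (fun v => φ (runs B v).card) =
    wsum n Q (fun v => φ (splits B v).card)) ∧
  (∀ φ : ℕ → ℕ, wsum n Q (ascWeight φ B) = wsum n Q (descWeight φ B))

lemma card_splits_two (v : ℕ → ℕ) :
    (splits 2 v).card = 3 * ascInd v + 2 * descInd v := by
  classical
  have h3 := card_filter_one_le 2 v
  have h1 : 1 ∈ splits 2 v ↔ v 0 < v 1 := by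
    rw [mem_splits]
    constructor
    · intro h; exact h.2 0 1 (by omega) le_rfl (by omega)
    · intro h
      refine ⟨by omega, fun i j hi hj hj2 => ?_⟩
      obtain rfl : i = 0 := by omega
      obtain rfl : j = 1 := by omega
      exact h
  have h2 : (splits 2 v).filter (2 ≤ ·) = {2} := by
    ext u
    simp only [Finset.mem_filter, Finset.mem_singleton]
    constructor
    · rintro ⟨h, h'⟩
      have := (mem_splits.1 h).1
      omega
    · rintro rfl
      exact ⟨top_mem_splits 2 v, le_rfl⟩
  by_cases hA : v 0 < v 1
  · have := card_filter_two_le (h1.2 hA)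
    rw [h2] at this
    simp [ascInd, descInd, hA, ← this]
  · have := filter_two_eq (fun h => hA (h1.1 h))
    rw [← this, h2] at h3
    simp [ascInd, descInd, hA, ← h3]

/-- `runs B v` has at least two elements, and exactly two iff the first two entries descend. -/
lemma two_le_card_runs {B : ℕ} (hB : 2 ≤ B) (v : ℕ → ℕ) :
    2 ≤ (runs B v).card ∧ (3 ≤ (runs B v).card ↔ v 0 < v 1) := by
  have hr := runs_eq_range B v
  constructor
  · have : 1 ∈ runs B v := by
      rw [mem_runs]; exact ⟨by omega, fun i j _ _ => by omega⟩
    rw [hr, Finset.mem_range] at this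
    omega
  · have : 2 ∈ runs B v ↔ v 0 < v 1 := by
      rw [mem_runs]
      constructor
      · intro h; exact h.2 0 1 (by omega) (by omega)
      · intro h
        refine ⟨hB, fun i j hij hj => ?_⟩
        obtain rfl : i = 0 := by omega
        obtain rfl : j = 1 := by omega
        exact h
    rw [← this]
    conv_rhs => rw [hr, Finset.mem_range]
    omega

lemma card_runs_two (v : ℕ → ℕ) : (runs 2 v).card = 3 * ascInd v + 2 * descInd v := by
  classical
  have h := two_le_card_runs le_rfl v
  have h3 : (runs 2 v).card ≤ 3 := by
    unfold runs
    exact (Finset.card_filter_le _ _).trans (by simp)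
  by_cases hA : v 0 < v 1
  · have := h.2.2 hA
    simp [ascInd, descInd, hA]; omega
  · have : ¬ 3 ≤ (runs 2 v).card := fun h' => hA (h.2.1 h')
    simp [ascInd, descInd, hA]; omega

lemma ascInd_add_descInd (v : ℕ → ℕ) : ascInd v + descInd v = 1 := by
  unfold ascInd descInd; split_ifs <;> rfl

/-- For `B = 2` the invariant only depends on the numbers of initial ascents and descents. -/
lemma agree_two {n : ℕ} {P Q : (ℕ → ℕ) → Prop} (hA : wsum n P ascInd = wsum n Q ascInd)
    (hD : wsum n P descInd = wsum n Q descInd) : Agree n 2 P Q := by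
  have key : ∀ (φ : ℕ → ℕ) (v : ℕ → ℕ),
      φ (3 * ascInd v + 2 * descInd v) = φ 3 * ascInd v + φ 2 * descInd v := by
    intro φ v
    unfold ascInd descInd
    split_ifs <;> simp
  refine ⟨fun φ => ?_, fun φ => wsum_congr fun π => ?_⟩
  · simp only [card_runs_two, card_splits_two, key, wsum_add, wsum_mul, hA, hD]
  · have h := card_splits_two (toN π)
    unfold ascWeight descWeight
    rw [h]
    by_cases h0 : toN π 0 < toN π 1
    · have : 1 ∈ splits 2 (toN π) := by
        rw [mem_splits]
        refine ⟨by omega, fun i j hi hj hj2 => ?_⟩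
        obtain rfl : i = 0 := by omega
        obtain rfl : j = 1 := by omega
        exact h0
      simp [h0, this]
    · simp [h0, ascInd, descInd, psum]

/-- The invariant implies the equality of the numbers of initial descents. -/
lemma agree_desc {n B : ℕ} {P Q : (ℕ → ℕ) → Prop} (hB : 2 ≤ B) (h : Agree n B P Q) :
    wsum n P descInd = wsum n Q descInd := by
  classical
  set φ : ℕ → ℕ := fun s => if s = 2 then 1 else 0 with hφ
  have e1 : wsum n P descInd = wsum n P (fun v => φ (runs B v).card) := by
    refine wsum_congr fun π => ?_
    have h2 := two_le_card_runs hB (toN π)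
    by_cases hA : toN π 0 < toN π 1
    · have := h2.2.2 hA
      simp [descInd, hA, hφ]; omega
    · have : ¬ 3 ≤ (runs B (toN π)).card := fun h' => hA (h2.2.1 h')
      simp [descInd, hA, hφ]; omega
  -- `[s = 2] = [s = 2, descent] + [s = 2, ascent, 1 ∉ splits]`
  have e2 : wsum n Q (fun v => φ (splits B v).card) =
      wsum n Q (fun v => φ (splits B v).card * descInd v) + wsum n Q (ascWeight φ B) := by
    rw [← wsum_add]
    refine wsum_congr fun π => ?_
    by_cases hA : toN π 0 < toN π 1
    · by_cases h1 : 1 ∈ splits B (toN π)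
      · have h2 := card_filter_two_le h1
        have h3 : 0 < ((splits B (toN π)).filter (2 ≤ ·)).card :=
          Finset.card_pos.2 ⟨B, by simp [top_mem_splits, hB]⟩
        simp [ascWeight, descInd, hA, h1, hφ]; omega
      · simp [ascWeight, descInd, hA, h1]
    · simp [ascWeight, descInd, hA]
  have e3 : wsum n Q descInd =
      wsum n Q (fun v => φ (splits B v).card * descInd v) + wsum n Q (descWeight φ B) := by
    rw [← wsum_add]
    refine wsum_congr fun π => ?_
    have h2 := two_le_card_splits (toN π) hB
    by_cases hA : toN π 0 < toN π 1
    · simp [descWeight, descInd, hA]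
    · simp only [descWeight, descInd, hA, if_false, mul_one]
      rcases Nat.lt_or_ge 2 (splits B (toN π)).card with h3 | h3
      · obtain ⟨k, hk⟩ : ∃ k, (splits B (toN π)).card - 2 = k + 1 :=
          ⟨(splits B (toN π)).card - 3, by omega⟩
        rw [hk]
        simp [hφ, psum, show (splits B (toN π)).card ≠ 2 by omega]
      · simp [hφ, psum, show (splits B (toN π)).card = 2 by omega]
  rw [e1, h.1, e2, e3, h.2]

lemma agree_total {n B : ℕ} {P Q : (ℕ → ℕ) → Prop} (h : Agree n B P Q) :
    wsum n P (fun _ => 1) = wsum n Q (fun _ => 1) :=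
  h.1 fun _ => 1

lemma agree_asc {n B : ℕ} {P Q : (ℕ → ℕ) → Prop} (hB : 2 ≤ B) (h : Agree n B P Q) :
    wsum n P ascInd = wsum n Q ascInd := by
  have h1 := agree_total h
  have h2 := agree_desc hB h
  have e : (fun _ : ℕ → ℕ => 1) = fun v => ascInd v + descInd v :=
    funext fun v => (ascInd_add_descInd v).symm
  rw [e, wsum_add, wsum_add] at h1
  omega

/-- The auxiliary ascent/descent identity survives an insertion step. -/
lemma second_step {n B : ℕ} {P Q : (ℕ → ℕ) → Prop} (hB : 2 ≤ B) (h : Agree n B P Q)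
    (φ : ℕ → ℕ) :
    wsum n Q (fun v => ∑ t ∈ splits B v, ascWeight φ (B + 1) (ins t v)) =
      wsum n Q (fun v => ∑ t ∈ splits B v, descWeight φ (B + 1) (ins t v)) := by
  classical
  have := h.2 fun s => psum φ (s - 1)
  simp only [sum_ascWeight, sum_descWeight φ hB, wsum_add]
  rw [← this]

/-- Adding a bottom row with `B + 1` cells preserves the invariant. -/
lemma agree_step {n B : ℕ} {b : ℕ → ℕ} (hB : 2 ≤ B) (hBn : B ≤ n) (hb0 : b 0 = B + 1)
    (hmono : ∀ i ≤ n, b 0 ≤ b i)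
    (h : Agree n B (Good321 n (tailDiag b)) (Good312 n (tailDiag b))) :
    Agree (n + 1) (B + 1) (Good321 (n + 1) b) (Good312 (n + 1) b) := by
  have s1 := wsum_step (n := n) (P := Good321 (n + 1) b) (Q := Good321 n (tailDiag b))
    (T := runs B) (fun v t ht => (mem_runs.1 ht).1.trans hBn)
    (fun π t ht => good321_ins (fun i hi => toN_lt π hi)
      (fun i hi j hj hij => toN_ne π hi hj hij) hb0 hmono ht)
  have s2 := wsum_step (n := n) (P := Good312 (n + 1) b) (Q := Good312 n (tailDiag b))
    (T := splits B) (fun v t ht => (mem_splits.1 ht).1.trans hBn)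
    (fun π t ht => good312_ins (fun i hi => toN_lt π hi)
      (fun i hi j hj hij => toN_ne π hi hj hij) hb0 hBn hmono ht)
  refine ⟨fun φ => ?_, fun φ => ?_⟩
  · rw [s1, s2]
    simp only [sum_runs, sum_splits]
    exact h.1 (psum φ)
  · rw [s2, s2]
    exact second_step hB h φ

lemma agree_main (n : ℕ) : ∀ b : ℕ → ℕ, (∀ i j, i ≤ j → j < n + 2 → b i ≤ b j) →
    (∀ y < n + 2, y + 1 ≤ b y ∧ b y ≤ n + 2) →
    (∀ j, j + 1 < n + 2 → b j < b (j + 1) → b j = j + 3) →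
    2 ≤ b 0 ∧ Agree (n + 2) (b 0) (Good321 (n + 2) b) (Good312 (n + 2) b) := by
  induction n with
  | zero =>
    intro b hmono hb hcrit
    have h0 := hb 0 (by omega)
    have h1 := hb 1 (by omega)
    have h2 := hcrit 0 (by omega)
    simp only [Nat.zero_add] at h0 h1 h2
    have e : b 0 = 2 := by
      by_contra hne
      have := h2 (by omega)
      omega
    -- in size two there is no room for a pattern of length three
    have hPQ : Good321 (0 + 2) b = Good312 (0 + 2) b := by
      funext v
      unfold Good321 Good312
      apply propext
      constructor
      · rintro ⟨h, _⟩; exact ⟨h, fun i j k _ _ _ => by omega⟩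
      · rintro ⟨h, _⟩; exact ⟨h, fun i j k _ _ _ => by omega⟩
    rw [e, hPQ]
    exact ⟨le_rfl, agree_two rfl rfl⟩
  | succ n ih =>
    intro b hmono hb hcrit
    have hb' := hb 0 (by omega)
    have hb1 := hb 1 (by omega)
    have h01 := hmono 0 1 (by omega) (by omega)
    obtain ⟨h2, hA⟩ := ih (tailDiag b)
      (fun i j hij hj => by
        have := hmono (i + 1) (j + 1) (by omega) (by omega)
        unfold tailDiag; omega)
      (fun y hy => by
        have := hb (y + 1) (by omega)
        unfold tailDiag; omega)
      (fun j hj hlt => by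
        have h := hcrit (j + 1) (by omega)
        unfold tailDiag at hlt ⊢
        have := h (by omega)
        omega)
    have e1 : tailDiag b 0 = b 1 - 1 := rfl
    by_cases hc : b 0 < b 1
    · have h3 := hcrit 0 (by omega) hc
      have hb0 : b 0 = 2 + 1 := h3
      rw [hb0]
      exact ⟨by omega, agree_step le_rfl (by omega) hb0
        (fun i hi => hmono 0 i (by omega) (by omega))
        (agree_two (agree_asc h2 hA) (agree_desc h2 hA))⟩
    · obtain ⟨B, hB⟩ : ∃ B, b 0 = B + 1 := ⟨b 0 - 1, by omega⟩
      have e2 : tailDiag b 0 = B := by omega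
      rw [e2] at h2 hA
      rw [hB]
      exact ⟨by omega, agree_step h2 (by omega) hB
        (fun i hi => hmono 0 i (by omega) (by omega)) hA⟩

/-! ### Translation to `SYcard` and its variants -/

/-- Row lengths as a function on `ℕ`. -/
def extDiag {n : ℕ} (b : Fin n → ℕ) (i : ℕ) : ℕ := if h : i < n then b ⟨i, h⟩ else 0

lemma toN_coe {n : ℕ} (π : Equiv.Perm (Fin n)) (i : Fin n) : toN π i = π i := by simp [toN]

lemma extDiag_coe {n : ℕ} (b : Fin n → ℕ) (i : Fin n) : extDiag b i = b i := by simp [extDiag]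

lemma transversal_iff {n : ℕ} (b : Fin n → ℕ) (π : Equiv.Perm (Fin n)) :
    IsTransversal b π ↔ ∀ i < n, i < extDiag b (toN π i) := by
  constructor
  · intro h i hi
    have := h ⟨i, hi⟩
    have e := toN_coe π ⟨i, hi⟩
    simp only at e this
    rw [e, extDiag_coe]; omega
  · intro h i
    have := h i i.2
    rw [toN_coe, extDiag_coe] at this
    omega

lemma good321_iff {n : ℕ} {b : Fin n → ℕ} (hmono : Monotone b) (π : Equiv.Perm (Fin n)) :
    (IsTransversal b π ∧ ¬ ContainsIn b π p321) ↔ Good321 n (extDiag b) (toN π) := by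
  unfold Good321
  rw [← transversal_iff]
  refine and_congr_right fun _ => ?_
  constructor
  · intro h i j k hij hjk hk hji hkj hkb
    obtain ⟨i, rfl⟩ : ∃ x : Fin n, i = x := ⟨⟨i, by omega⟩, rfl⟩
    obtain ⟨j, rfl⟩ : ∃ x : Fin n, j = x := ⟨⟨j, by omega⟩, rfl⟩
    obtain ⟨k, rfl⟩ : ∃ x : Fin n, k = x := ⟨⟨k, by omega⟩, rfl⟩
    simp only [toN_coe, extDiag_coe, Fin.val_fin_lt] at hij hjk hji hkj hkb
    have m1 := hmono hkj.le
    have m2 := hmono hji.le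
    apply h
    refine ⟨![i, j, k], ?_, ?_, ?_⟩
    · rw [Fin.strictMono_iff_lt_succ]
      intro s; fin_cases s <;> simpa
    · intro s t
      fin_cases s <;> fin_cases t <;>
        simp [p321, hji, hkj, hji.le, hkj.le, hkj.trans hji, (hkj.trans hji).le]
    · intro s t
      fin_cases s <;> fin_cases t <;> simp <;> omega
  · rintro h ⟨f, hf, ho, hin⟩
    have h1 : π (f 1) < π (f 0) := (ho 1 0).1 (by decide)
    have h2 : π (f 2) < π (f 1) := (ho 2 1).1 (by decide)
    have h3 := hin 2 2
    refine h (f 0) (f 1) (f 2) (hf (by decide)) (hf (by decide)) (f 2).2 ?_ ?_ ?_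
    · simpa [toN_coe] using h1
    · simpa [toN_coe] using h2
    · rw [toN_coe, extDiag_coe]; omega

lemma good312_iff {n : ℕ} {b : Fin n → ℕ} (hmono : Monotone b) (π : Equiv.Perm (Fin n)) :
    (IsTransversal b π ∧ ¬ ContainsIn b π p312) ↔ Good312 n (extDiag b) (toN π) := by
  unfold Good312
  rw [← transversal_iff]
  refine and_congr_right fun _ => ?_
  constructor
  · intro h i j k hij hjk hk hji hkj hkb
    obtain ⟨i, rfl⟩ : ∃ x : Fin n, i = x := ⟨⟨i, by omega⟩, rfl⟩
    obtain ⟨j, rfl⟩ : ∃ x : Fin n, j = x := ⟨⟨j, by omega⟩, rfl⟩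
    obtain ⟨k, rfl⟩ : ∃ x : Fin n, k = x := ⟨⟨k, by omega⟩, rfl⟩
    simp only [toN_coe, extDiag_coe, Fin.val_fin_lt] at hij hjk hji hkj hkb
    have m1 := hmono hkj.le
    have m2 := hmono hji.le
    apply h
    refine ⟨![i, j, k], ?_, ?_, ?_⟩
    · rw [Fin.strictMono_iff_lt_succ]
      intro s; fin_cases s <;> simpa
    · intro s t
      fin_cases s <;> fin_cases t <;>
        simp [p312, hji, hkj, hji.le, hkj.le, hji.trans hkj, (hji.trans hkj).le]
    · intro s t
      fin_cases s <;> fin_cases t <;> simp <;> omega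
  · rintro h ⟨f, hf, ho, hin⟩
    have h1 : π (f 1) < π (f 2) := (ho 1 2).1 (by decide)
    have h2 : π (f 2) < π (f 0) := (ho 2 0).1 (by decide)
    have h3 := hin 2 1
    refine h (f 0) (f 1) (f 2) (hf (by decide)) (hf (by decide)) (f 2).2 ?_ ?_ ?_
    · simpa [toN_coe] using h1
    · simpa [toN_coe] using h2
    · rw [toN_coe, extDiag_coe]; omega

lemma asc_iff {n : ℕ} (hn : 2 ≤ n) (π : Equiv.Perm (Fin n)) :
    (∀ i j : Fin n, (i : ℕ) = 0 → (j : ℕ) = 1 → π i < π j) ↔ toN π 0 < toN π 1 := by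
  have e0 := toN_coe π ⟨0, by omega⟩
  have e1 := toN_coe π ⟨1, by omega⟩
  simp only at e0 e1
  rw [e0, e1, Fin.val_fin_lt]
  constructor
  · intro h; exact h _ _ rfl rfl
  · intro h i j hi hj
    rw [show i = ⟨0, by omega⟩ from Fin.ext hi, show j = ⟨1, by omega⟩ from Fin.ext hj]
    exact h

lemma desc_iff {n : ℕ} (hn : 2 ≤ n) (π : Equiv.Perm (Fin n)) :
    (∀ i j : Fin n, (i : ℕ) = 0 → (j : ℕ) = 1 → π j < π i) ↔ ¬ toN π 0 < toN π 1 := by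
  have hne := toN_ne π (show 0 < n by omega) (show 1 < n by omega) (by omega)
  have e0 := toN_coe π ⟨0, by omega⟩
  have e1 := toN_coe π ⟨1, by omega⟩
  simp only at e0 e1
  have : (¬ toN π 0 < toN π 1) ↔ toN π 1 < toN π 0 := by omega
  rw [this, e0, e1, Fin.val_fin_lt]
  constructor
  · intro h; exact h _ _ rfl rfl
  · intro h i j hi hj
    rw [show i = ⟨0, by omega⟩ from Fin.ext hi, show j = ⟨1, by omega⟩ from Fin.ext hj]
    exact h

open Classical in
lemma card_eq_wsum {n : ℕ} (A C : Equiv.Perm (Fin n) → Prop) (P R : (ℕ → ℕ) → Prop)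
    (hA : ∀ π, A π ↔ P (toN π)) (hC : ∀ π, C π ↔ R (toN π)) :
    Nat.card {π // A π ∧ C π} = wsum n P (fun v => if R v then 1 else 0) := by
  rw [Nat.card_eq_fintype_card, Fintype.card_subtype, Finset.card_filter]
  unfold wsum
  refine Finset.sum_congr rfl fun π _ => ?_
  by_cases h1 : P (toN π) <;> by_cases h2 : R (toN π) <;> simp [hA, hC, h1, h2]

section Cards

variable {n : ℕ} {b : Fin n → ℕ} {τ : Equiv.Perm (Fin 3)} {P : (ℕ → ℕ) → Prop}

lemma SYcard_eq (h : ∀ π, (IsTransversal b π ∧ ¬ ContainsIn b π τ) ↔ P (toN π)) :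
    SYcard b τ = wsum n P (fun _ => 1) := by
  have := card_eq_wsum _ (fun _ => True) P (fun _ => True) h (fun _ => Iff.rfl)
  simpa [SYcard] using this

lemma SYcardLeftDesc_eq (hn : 2 ≤ n)
    (h : ∀ π, (IsTransversal b π ∧ ¬ ContainsIn b π τ) ↔ P (toN π)) :
    SYcardLeftDesc b τ = wsum n P descInd := by
  classical
  have := card_eq_wsum _ _ P (fun v => ¬ v 0 < v 1) h (desc_iff hn)
  simp only [and_assoc] at this
  rw [SYcardLeftDesc, this]
  refine wsum_congr fun π => ?_
  by_cases hA : toN π 0 < toN π 1 <;> simp [descInd, hA]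

lemma SYcardLeftAsc_eq (hn : 2 ≤ n)
    (h : ∀ π, (IsTransversal b π ∧ ¬ ContainsIn b π τ) ↔ P (toN π)) :
    SYcardLeftAsc b τ = wsum n P ascInd := by
  classical
  have := card_eq_wsum _ _ P (fun v => v 0 < v 1) h (asc_iff hn)
  simp only [and_assoc] at this
  rw [SYcardLeftAsc, this]
  refine wsum_congr fun π => ?_
  by_cases hA : toN π 0 < toN π 1 <;> simp [ascInd, hA]

end Cards

theorem stmt10 (n : ℕ) (hn : 2 ≤ n) (b : Fin n → ℕ) (hmono : Monotone b)
    (hb : ∀ y : Fin n, (y : ℕ) + 1 ≤ b y ∧ b y ≤ n)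
    (hcrit : ∀ (j : ℕ) (h : j + 1 < n),
      b ⟨j, Nat.lt_of_succ_lt h⟩ < b ⟨j + 1, h⟩ → b ⟨j, Nat.lt_of_succ_lt h⟩ = j + 3) :
    SYcardLeftDesc b p321 = SYcardLeftDesc b p312 ∧
    SYcardLeftAsc b p321 = SYcardLeftAsc b p312 ∧
    SYcard b p321 = SYcard b p312 := by
  obtain ⟨m, rfl⟩ : ∃ m, n = m + 2 := ⟨n - 2, by omega⟩
  obtain ⟨h2, hA⟩ := agree_main m (extDiag b)
    (fun i j hij hj => by
      simp only [extDiag, hj, show i < m + 2 by omega, dif_pos]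
      exact hmono (by simpa [Fin.le_def] using hij))
    (fun y hy => by
      simp only [extDiag, hy, dif_pos]
      exact hb ⟨y, hy⟩)
    (fun j hj => by
      simp only [extDiag, hj, show j < m + 2 by omega, dif_pos]
      exact hcrit j hj)
  have g1 := good321_iff hmono
  have g2 := good312_iff hmono
  refine ⟨?_, ?_, ?_⟩
  · rw [SYcardLeftDesc_eq hn g1, SYcardLeftDesc_eq hn g2]
    exact agree_desc h2 hA
  · rw [SYcardLeftAsc_eq hn g1, SYcardLeftAsc_eq hn g2]
    exact agree_asc h2 hA
  · rw [SYcard_eq g1, SYcard_eq g2]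
    exact agree_total hA
end

section
/- If every critical point of a Young diagram Y has index at most 2, i.e. for all 1 ≤ y ≤ n−1, b(y+1) > b(y) implies b(y) − y ≤ 2, then |S_Y(312)| = |S_Y(321)|. -/
/-!
Group the transversals of `Y` into classes according to their left-to-right maxima (positions and
values).  Each class contains exactly one transversal avoiding `321` in `Y` and exactly one
avoiding `312` in `Y`, so both counts equal the number of classes.

*Existence.*  In an occurrence of `312` inside `Y`, exchanging the dots playing `1` and `2` gives a
transversal of the same class that is lexicographically larger; hence the lexicographically largest
member of a class avoids `312`.  Likewise the exchange `321 → 312` is lexicographically decreasing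
and the smallest member avoids `321`.  This needs no condition on the critical points.

*Uniqueness.*  Let `π ≠ ρ` be in the same class, let `i` be the first column where they differ,
and say `π i < ρ i`.  Then column `i` is not a left-to-right maximum: some earlier column `j`
carries a common dot of height `M > ρ i`.  The value `π i` appears in `ρ` to the right of `i`, and
this is a `321` in `ρ`.  For `312`, suppose that `π` avoids it.  The value `c = ρ i` sits in `π` to
the right of `i`, hence beyond the row of `Y` at height `π i`, of length `B` say.
So there is a critical point at some height `y` with row length `B ≤ y + 2`.  Both transversals
have exactly `B - y ≤ 2` dots of height `> y` in the first `B` columns; for `ρ` these are the dots in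
columns `j` and `i`, so for `π` these are the one in column `j` and another one in some column
`x > i`.  The equality of running maxima forces `π x < M`, so the columns
`j < i < x` form a `312` of `π` inside `Y`.
-/

open Equiv

/-! ### Left-to-right maxima and exchanges of dots -/

/-- The set of pairs `(i, v)` such that `v` bounds all entries of `π` in columns `≤ i`.  It encodes
the running maxima of `π`, equivalently the positions and values of its left-to-right maxima. -/
def runBounds {n : ℕ} (π : Equiv.Perm (Fin n)) : Set (Fin n × Fin n) :=
  {p | ∀ k ≤ p.1, π k ≤ p.2}

lemma runBounds_iff {n : ℕ} {π ρ : Equiv.Perm (Fin n)} (h : runBounds π = runBounds ρ)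
    (i v : Fin n) : (∀ k ≤ i, π k ≤ v) ↔ (∀ k ≤ i, ρ k ≤ v) := by
  have := Set.ext_iff.1 h (i, v)
  exact this

/-- Exchanging two dots that lie to the right of and below a third one does not affect the
left-to-right maxima. -/
lemma runBounds_swap {n : ℕ} (π : Equiv.Perm (Fin n)) {i j k : Fin n} (hij : i < j) (hik : i < k)
    (hj : π j < π i) (hk : π k < π i) :
    runBounds ((Equiv.swap j k).trans π) = runBounds π := by
  have key : ∀ σ : Equiv.Perm (Fin n), σ j < σ i → σ k < σ i →
      runBounds σ ⊆ runBounds ((Equiv.swap j k).trans σ) := by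
    rintro σ h1 h2 ⟨x, v⟩ h l hl
    simp only [runBounds, Set.mem_ofPred_eq, Equiv.trans_apply] at h hl ⊢
    rcases eq_or_ne l j with rfl | hlj
    · rw [Equiv.swap_apply_left]
      exact h2.le.trans (h i (hij.le.trans hl))
    rcases eq_or_ne l k with rfl | hlk
    · rw [Equiv.swap_apply_right]
      exact h1.le.trans (h i (hik.le.trans hl))
    rw [Equiv.swap_apply_of_ne_of_ne hlj hlk]
    exact h l hl
  refine Set.Subset.antisymm ?_ (key π hj hk)
  have hi : Equiv.swap j k i = i := Equiv.swap_apply_of_ne_of_ne hij.ne hik.ne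
  have h := key ((Equiv.swap j k).trans π) (by simpa [hi] using hk) (by simpa [hi] using hj)
  have e : (Equiv.swap j k).trans ((Equiv.swap j k).trans π) = π := by
    ext x; simp
  rwa [e] at h

lemma isTransversal_swap {n : ℕ} {b : Fin n → ℕ} {π : Equiv.Perm (Fin n)}
    (hπ : IsTransversal b π) {j k : Fin n} (hj : (j : ℕ) + 1 ≤ b (π k))
    (hk : (k : ℕ) + 1 ≤ b (π j)) : IsTransversal b ((Equiv.swap j k).trans π) := by
  intro l
  rw [Equiv.trans_apply]
  rcases eq_or_ne l j with rfl | hlj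
  · rwa [Equiv.swap_apply_left]
  rcases eq_or_ne l k with rfl | hlk
  · rwa [Equiv.swap_apply_right]
  rw [Equiv.swap_apply_of_ne_of_ne hlj hlk]
  exact hπ l

/-! ### The two patterns in coordinates -/

lemma containsIn_p312 {n : ℕ} {b : Fin n → ℕ} (hmono : Monotone b) {π : Equiv.Perm (Fin n)} :
    ContainsIn b π p312 ↔ ∃ i j k : Fin n, i < j ∧ j < k ∧ π j < π k ∧ π k < π i ∧
      (k : ℕ) + 1 ≤ b (π j) := by
  constructor
  · rintro ⟨f, hf, ho, hY⟩
    exact ⟨f 0, f 1, f 2, hf (by decide), hf (by decide), (ho 1 2).1 (by decide),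
      (ho 2 0).1 (by decide), hY 2 1⟩
  · rintro ⟨i, j, k, hij, hjk, h1, h2, h3⟩
    have h4 := hmono h1.le
    have h5 := hmono h2.le
    refine ⟨![i, j, k], ?_, ?_, ?_⟩
    · intro s t hst
      fin_cases s <;> fin_cases t <;> simp_all [hij.trans hjk]
    · intro s t
      fin_cases s <;> fin_cases t <;>
        simp [p312, h1, h2, h1.trans h2, h1.le, h2.le, (h1.trans h2).le]
    · intro s t
      fin_cases s <;> fin_cases t <;> simp <;> omega

lemma containsIn_p321 {n : ℕ} {b : Fin n → ℕ} (hmono : Monotone b) {π : Equiv.Perm (Fin n)}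
    (hπ : IsTransversal b π) :
    ContainsIn b π p321 ↔ ∃ i j k : Fin n, i < j ∧ j < k ∧ π k < π j ∧ π j < π i := by
  constructor
  · rintro ⟨f, hf, ho, hY⟩
    exact ⟨f 0, f 1, f 2, hf (by decide), hf (by decide), (ho 2 1).1 (by decide),
      (ho 1 0).1 (by decide)⟩
  · rintro ⟨i, j, k, hij, hjk, h1, h2⟩
    have h3 := hπ k
    have h4 := hmono h1.le
    have h5 := hmono h2.le
    refine ⟨![i, j, k], ?_, ?_, ?_⟩
    · intro s t hst
      fin_cases s <;> fin_cases t <;> simp_all [hij.trans hjk]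
    · intro s t
      fin_cases s <;> fin_cases t <;>
        simp [p321, h1, h2, h1.trans h2, h1.le, h2.le, (h1.trans h2).le]
    · intro s t
      fin_cases s <;> fin_cases t <;> simp <;> omega

/-! ### Every class contains an avoider -/

lemma exists_avoid_p312 {n : ℕ} {b : Fin n → ℕ} (hmono : Monotone b) (π : Equiv.Perm (Fin n))
    (hπ : IsTransversal b π) :
    ∃ ρ, IsTransversal b ρ ∧ ¬ ContainsIn b ρ p312 ∧ runBounds ρ = runBounds π := by
  obtain ⟨ρ, ⟨h1, h2⟩, hmax⟩ := Set.exists_max_image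
    {ρ : Equiv.Perm (Fin n) | IsTransversal b ρ ∧ runBounds ρ = runBounds π}
    (fun ρ => toLex (ρ : Fin n → Fin n)) (Set.toFinite _) ⟨π, hπ, rfl⟩
  refine ⟨ρ, h1, fun hc => ?_, h2⟩
  obtain ⟨i, j, k, hij, hjk, h3, h4, h5⟩ := (containsIn_p312 hmono).1 hc
  refine (hmax ((Equiv.swap j k).trans ρ) ⟨isTransversal_swap h1 ?_ h5, ?_⟩).not_gt ?_
  · have := hmono h3.le
    omega
  · rw [runBounds_swap ρ hij (hij.trans hjk) (h3.trans h4) h4, h2]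
  · refine ⟨j, fun l hl => ?_, ?_⟩
    · simp [Equiv.swap_apply_of_ne_of_ne hl.ne (hl.trans hjk).ne]
    · simpa using h3

lemma exists_avoid_p321 {n : ℕ} {b : Fin n → ℕ} (hmono : Monotone b) (π : Equiv.Perm (Fin n))
    (hπ : IsTransversal b π) :
    ∃ ρ, IsTransversal b ρ ∧ ¬ ContainsIn b ρ p321 ∧ runBounds ρ = runBounds π := by
  obtain ⟨ρ, ⟨h1, h2⟩, hmin⟩ := Set.exists_min_image
    {ρ : Equiv.Perm (Fin n) | IsTransversal b ρ ∧ runBounds ρ = runBounds π}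
    (fun ρ => toLex (ρ : Fin n → Fin n)) (Set.toFinite _) ⟨π, hπ, rfl⟩
  refine ⟨ρ, h1, fun hc => ?_, h2⟩
  obtain ⟨i, j, k, hij, hjk, h3, h4⟩ := (containsIn_p321 hmono h1).1 hc
  have h5 := h1 k
  have h6 := hmono h3.le
  refine (hmin ((Equiv.swap j k).trans ρ) ⟨isTransversal_swap h1 ?_ ?_, ?_⟩).not_gt ?_
  · omega
  · omega
  · rw [runBounds_swap ρ hij (hij.trans hjk) h4 (h3.trans h4), h2]
  · refine ⟨j, fun l hl => ?_, ?_⟩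
    · simp [Equiv.swap_apply_of_ne_of_ne hl.ne (hl.trans hjk).ne]
    · simpa using h3

/-! ### Uniqueness of the avoider in a class -/

/-- At the first column where two members of a class differ, neither has a left-to-right
maximum, so there is a common earlier and higher dot. -/
lemma exists_first_diff {n : ℕ} {π ρ : Equiv.Perm (Fin n)} (h : runBounds π = runBounds ρ)
    (hne : π ≠ ρ) : ∃ i j : Fin n, (∀ k < i, π k = ρ k) ∧ π i ≠ ρ i ∧ j < i ∧
      π i < π j ∧ ρ i < π j := by
  have hex : ∃ i, π i ≠ ρ i := by
    by_contra! hc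
    exact hne (Equiv.ext hc)
  obtain ⟨i, hi, hmin⟩ := Set.exists_min_image {i | π i ≠ ρ i} id (Set.toFinite _) hex
  have heq : ∀ k < i, π k = ρ k := by
    intro k hk
    by_contra hc
    exact (hmin k hc).not_gt hk
  have key : ∀ σ τ : Equiv.Perm (Fin n), runBounds σ = runBounds τ → (∀ k < i, σ k = τ k) →
      σ i < τ i → ∃ j < i, σ i < σ j ∧ τ i < σ j := by
    intro σ τ hb he hlt
    by_contra! hc
    have hτ : ∀ k ≤ i, τ k ≤ τ i := by
      intro k hk
      rcases hk.lt_or_eq with hk | rfl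
      · by_contra hc2
        rw [not_le, ← he k hk] at hc2
        exact ((hc k hk (hlt.trans hc2)).trans_lt hc2).false
      · exact le_rfl
    -- `τ i` is a record of `τ`, so it must already be attained by `σ` in some column `≤ i`.
    have hpos : 0 < (τ i).val := lt_of_le_of_lt (Nat.zero_le _) hlt
    have hb2 := (runBounds_iff hb i ⟨(τ i).val - 1, by omega⟩).1 (by
      intro k hk
      have h1 := (runBounds_iff hb i (τ i)).2 hτ k hk
      have h2 : σ k ≠ τ i := by
        rcases hk.lt_or_eq with hk | rfl
        · rw [he k hk]
          exact fun h => hk.ne (τ.injective h)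
        · exact hlt.ne
      rw [Fin.le_def] at h1 ⊢
      have h3 := Fin.val_ne_of_ne h2
      simp only
      omega) i le_rfl
    rw [Fin.le_def] at hb2
    simp only at hb2
    omega
  rcases lt_or_gt_of_ne hi with hlt | hlt
  · obtain ⟨j, hj, h1, h2⟩ := key π ρ h heq hlt
    exact ⟨i, j, heq, hi, hj, h1, h2⟩
  · obtain ⟨j, hj, h1, h2⟩ := key ρ π h.symm (fun k hk => (heq k hk).symm) hlt
    rw [← heq j hj] at h1 h2
    exact ⟨i, j, heq, hi, hj, h2, h1⟩

/-- If two permutations agree to the left of column `i` but not in it, then the value of one in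
column `i` appears in the other one to the right of `i`. -/
lemma lt_symm_apply_of_first_diff {n : ℕ} {π ρ : Equiv.Perm (Fin n)} {i : Fin n}
    (heq : ∀ k < i, π k = ρ k) (hi : π i ≠ ρ i) : i < π.symm (ρ i) := by
  by_contra! hc
  rcases hc.lt_or_eq with h | h
  · have := heq _ h
    rw [Equiv.apply_symm_apply] at this
    exact h.ne (ρ.injective this).symm
  · exact hi ((Equiv.symm_apply_eq π).1 h).symm

lemma unique_p321 {n : ℕ} {b : Fin n → ℕ} (hmono : Monotone b) {π ρ : Equiv.Perm (Fin n)}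
    (hπ : IsTransversal b π) (hρ : IsTransversal b ρ) (hπa : ¬ ContainsIn b π p321)
    (hρa : ¬ ContainsIn b ρ p321) (h : runBounds π = runBounds ρ) : π = ρ := by
  by_contra hne
  obtain ⟨i, j, heq, hi, hj, h1, h2⟩ := exists_first_diff h hne
  rcases lt_or_gt_of_ne hi with hlt | hlt
  · refine hρa ((containsIn_p321 hmono hρ).2 ⟨j, i, ρ.symm (π i), hj, ?_, ?_, ?_⟩)
    · exact lt_symm_apply_of_first_diff (fun k hk => (heq k hk).symm) hi.symm
    · simpa using hlt
    · rwa [← heq j hj]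
  · refine hπa ((containsIn_p321 hmono hπ).2 ⟨j, i, π.symm (ρ i), hj, ?_, ?_, h1⟩)
    · exact lt_symm_apply_of_first_diff heq hi
    · simpa using hlt

/-- If the row at (zero-indexed) height `y` has length `b y`, the first `b y` columns carry all
`y + 1` dots of height `≤ y`, hence exactly `b y - (y + 1)` dots of height `> y`. -/
lemma card_high {n : ℕ} {b : Fin n → ℕ} (hmono : Monotone b) {π : Equiv.Perm (Fin n)}
    (hπ : IsTransversal b π) (y : Fin n) (hy : b y ≤ n) :
    (Finset.univ.filter fun x : Fin n => (x : ℕ) < b y ∧ y < π x).card + (y + 1) = b y := by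
  have h1 : (Finset.univ.filter fun x : Fin n => (x : ℕ) < b y ∧ ¬ y < π x).card = y + 1 := by
    rw [← Fin.card_Iic y]
    refine Finset.card_bij (fun x _ => π x) ?_ (fun _ _ _ _ h => π.injective h) ?_
    · intro x hx
      simpa using (Finset.mem_filter.1 hx).2.2
    · intro v hv
      rw [Finset.mem_Iic] at hv
      refine ⟨π.symm v, ?_, by simp⟩
      have h2 := hπ (π.symm v)
      have h3 := hmono hv
      rw [Equiv.apply_symm_apply] at h2
      simp only [Finset.mem_filter, Finset.mem_univ, true_and, Equiv.apply_symm_apply, not_lt]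
      exact ⟨by omega, hv⟩
  have h2 : (Finset.univ.filter fun x : Fin n => (x : ℕ) < b y).card = b y := by
    rw [Fin.card_filter_val_lt, min_eq_right hy]
  rw [← h1]
  conv_rhs => rw [← h2]
  rw [← Finset.card_filter_add_card_filter_not (s := Finset.univ.filter fun x : Fin n =>
    (x : ℕ) < b y) (fun x => y < π x), Finset.filter_filter, Finset.filter_filter]

/-- If some row is longer than the row at height `a`, the last row having the same length as the
latter is a critical point. -/
lemma exists_crit {n : ℕ} {b : Fin n → ℕ} (hmono : Monotone b)
    (hcrit : ∀ (j : ℕ) (h : j + 1 < n),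
      b ⟨j, Nat.lt_of_succ_lt h⟩ < b ⟨j + 1, h⟩ → b ⟨j, Nat.lt_of_succ_lt h⟩ ≤ j + 3)
    {a c : Fin n} (hac : b a < b c) :
    ∃ y, a ≤ y ∧ b y = b a ∧ b y ≤ (y : ℕ) + 3 := by
  obtain ⟨y, hy, hmax⟩ := Set.exists_max_image {y | b y ≤ b a} id (Set.toFinite _) ⟨a, le_refl (b a)⟩
  have hay : a ≤ y := hmax a (le_refl (b a))
  have hyc : y < c := by
    by_contra! hc
    exact ((hmono hc).trans hy).not_gt hac
  have hlt : (y : ℕ) + 1 < n := lt_of_le_of_lt hyc c.isLt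
  refine ⟨y, hay, le_antisymm hy (hmono hay), hcrit y hlt ?_⟩
  by_contra! hc
  have : (⟨y + 1, hlt⟩ : Fin n) ≤ y := hmax ⟨y + 1, hlt⟩ (hc.trans hy)
  rw [Fin.le_def] at this
  simp at this

lemma unique_p312_aux {n : ℕ} {b : Fin n → ℕ} (hmono : Monotone b)
    (hb : ∀ y : Fin n, (y : ℕ) + 1 ≤ b y ∧ b y ≤ n)
    (hcrit : ∀ (j : ℕ) (h : j + 1 < n),
      b ⟨j, Nat.lt_of_succ_lt h⟩ < b ⟨j + 1, h⟩ → b ⟨j, Nat.lt_of_succ_lt h⟩ ≤ j + 3)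
    {π ρ : Equiv.Perm (Fin n)} (hπ : IsTransversal b π) (hρ : IsTransversal b ρ)
    (hπa : ¬ ContainsIn b π p312) (h : runBounds π = runBounds ρ) {i j : Fin n}
    (heq : ∀ k < i, π k = ρ k) (hi : π i < ρ i) (hj : j < i) (hM : ρ i < π j) : False := by
  rw [containsIn_p312 hmono] at hπa
  push Not at hπa
  have hp := lt_symm_apply_of_first_diff heq hi.ne
  have hpB := hπa j i _ hj hp (by simpa using hi) (by simpa using hM)
  have hpc := hπ (π.symm (ρ i))
  rw [Equiv.apply_symm_apply] at hpc
  obtain ⟨y, hay, hyB, hy3⟩ := exists_crit hmono hcrit (a := π i) (c := ρ i) (by omega)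
  have hyc : y < ρ i := by
    by_contra! hc
    have := hmono hc
    omega
  have hiB := hπ i
  have cπ := card_high hmono hπ y (hb y).2
  have cρ := card_high hmono hρ y (hb y).2
  set D := Finset.univ.filter fun x : Fin n => (x : ℕ) < b y ∧ y < π x with hD
  set E := Finset.univ.filter fun x : Fin n => (x : ℕ) < b y ∧ y < ρ x with hE
  have hjE : j ∈ E := by
    simp only [hE, Finset.mem_filter, Finset.mem_univ, true_and, ← heq j hj]
    exact ⟨by omega, hyc.trans hM⟩
  have hiE : i ∈ E := by
    simp only [hE, Finset.mem_filter, Finset.mem_univ, true_and]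
    exact ⟨by omega, hyc⟩
  have hsub : ({j, i} : Finset (Fin n)) ⊆ E := by
    intro x hx
    rcases Finset.mem_insert.1 hx with rfl | hx
    · exact hjE
    · rw [Finset.mem_singleton.1 hx]; exact hiE
  have hpair : ({j, i} : Finset (Fin n)).card = 2 := Finset.card_pair hj.ne
  have hEle := Finset.card_le_card hsub
  have hEeq : ({j, i} : Finset (Fin n)) = E := Finset.eq_of_subset_of_card_le hsub (by omega)
  obtain ⟨x, hxD, hxj⟩ := Finset.exists_mem_ne (s := D) (by omega) j
  simp only [hD, Finset.mem_filter, Finset.mem_univ, true_and] at hxD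
  have hEmem : ∀ z : Fin n, (z : ℕ) < b y → y < ρ z → z = j ∨ z = i := by
    intro z h1 h2
    have : z ∈ E := by simp [hE, h1, h2]
    rw [← hEeq] at this
    simpa using this
  have hix : i < x := by
    rcases lt_trichotomy x i with hx | rfl | hx
    · rcases hEmem x hxD.1 (heq x hx ▸ hxD.2) with h | h
      · exact absurd h hxj
      · exact absurd h hx.ne
    · exact absurd hxD.2 hay.not_gt
    · exact hx
  -- `π j` bounds `ρ`, hence also `π`, on the columns `≤ x`.
  have hxM : π x ≤ π j := by
    refine (runBounds_iff h x (π j)).2 ?_ x le_rfl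
    intro z hz
    rcases le_or_gt (ρ z) y with hzy | hzy
    · exact hzy.trans (hyc.trans hM).le
    · rcases hEmem z (lt_of_le_of_lt hz hxD.1) hzy with rfl | rfl
      · exact (heq _ hj).ge
      · exact hM.le
  have hxM2 : π x < π j := lt_of_le_of_ne hxM fun e => hxj (π.injective e)
  have := hπa j i x hj hix (lt_of_le_of_lt hay hxD.2) hxM2
  have := hxD.1
  omega

lemma unique_p312 {n : ℕ} {b : Fin n → ℕ} (hmono : Monotone b)
    (hb : ∀ y : Fin n, (y : ℕ) + 1 ≤ b y ∧ b y ≤ n)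
    (hcrit : ∀ (j : ℕ) (h : j + 1 < n),
      b ⟨j, Nat.lt_of_succ_lt h⟩ < b ⟨j + 1, h⟩ → b ⟨j, Nat.lt_of_succ_lt h⟩ ≤ j + 3)
    {π ρ : Equiv.Perm (Fin n)} (hπ : IsTransversal b π) (hρ : IsTransversal b ρ)
    (hπa : ¬ ContainsIn b π p312) (hρa : ¬ ContainsIn b ρ p312)
    (h : runBounds π = runBounds ρ) : π = ρ := by
  by_contra hne
  obtain ⟨i, j, heq, hi, hj, h1, h2⟩ := exists_first_diff h hne
  rcases lt_or_gt_of_ne hi with hlt | hlt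
  · exact unique_p312_aux hmono hb hcrit hπ hρ hπa h heq hlt hj h2
  · refine unique_p312_aux hmono hb hcrit hρ hπ hρa h.symm (fun k hk => (heq k hk).symm) hlt hj ?_
    rwa [← heq j hj]

/-! ### The bijection -/

theorem stmt11 (n : ℕ) (b : Fin n → ℕ) (hmono : Monotone b)
    (hb : ∀ y : Fin n, (y : ℕ) + 1 ≤ b y ∧ b y ≤ n)
    (hcrit : ∀ (j : ℕ) (h : j + 1 < n),
      b ⟨j, Nat.lt_of_succ_lt h⟩ < b ⟨j + 1, h⟩ → b ⟨j, Nat.lt_of_succ_lt h⟩ ≤ j + 3) :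
    SYcard b p312 = SYcard b p321 := by
  unfold SYcard
  choose f hfT hfA hfB using exists_avoid_p321 (b := b) hmono
  refine Nat.card_congr (Equiv.ofBijective
    (fun π => ⟨f π.1 π.2.1, hfT _ _, hfA _ _⟩) ⟨?_, ?_⟩)
  · rintro ⟨π, hπ, hπa⟩ ⟨ρ, hρ, hρa⟩ h
    have h := congrArg runBounds (Subtype.mk.inj h)
    rw [hfB, hfB] at h
    exact Subtype.ext (unique_p312 hmono hb hcrit hπ hρ hπa hρa h)
  · rintro ⟨ρ, hρ, hρa⟩
    obtain ⟨π, hπ, hπa, h⟩ := exists_avoid_p312 hmono ρ hρ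
    exact ⟨⟨π, hπ, hπa⟩, Subtype.ext
      (unique_p321 hmono (hfT _ _) hρ (hfA _ _) hρa ((hfB _ _).trans h))⟩
end

section
/- If a Young diagram Y has an i-critical point with i ≥ 3, i.e. there exists 1 ≤ y ≤ n−1 with b(y+1) > b(y) and b(y) − y ≥ 3, then |S_Y(312)| > |S_Y(321)|. -/
/-!
A `321` pattern of a transversal always lies inside the diagram, since its lower right corner is the
dot of the entry `1`. Group the transversals into classes according to their left-to-right maxima
(positions and values); the class of `π` is recorded by the region `shadow π` below those maxima.

* A class contains at most one `321`-avoider, because the entries that are not left-to-right maxima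
  must increase (`eq_of_shadow_eq`).
* A nonempty class contains a `312`-avoider (`exists_avoids_312`). In an occurrence of `312` inside
  the diagram, exchanging the entries `1` and `2` gives a transversal of the same class with a
  smaller value of `∑ i, i * π i`, so a minimizer of this sum in the class avoids `312`.

Hence `|S_Y(321)| ≤ |S_Y(312)|`. A critical point of index at least `3` produces two different
`312`-avoiders in one class (`witA` and `witB`), which makes the inequality strict. With five rows
and columns they are `32514` and `31542`, where the cell in the last column and the bottom row is
missing from the diagram.
-/

open Equiv

/-! ### Classes of equal left-to-right maxima -/

/-- The cells weakly below and weakly to the right of some dot of `π`. Two permutations have the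
same left-to-right maxima exactly when they have the same shadow. -/
def shadow {n : ℕ} (π : Equiv.Perm (Fin n)) : Set (Fin n × Fin n) :=
  {x | ∃ k, k ≤ x.1 ∧ x.2 ≤ π k}

lemma mem_shadow {n : ℕ} (π : Equiv.Perm (Fin n)) (i v : Fin n) :
    (i, v) ∈ shadow π ↔ ∃ k, k ≤ i ∧ v ≤ π k := Iff.rfl

lemma exists_of_contains_312 {n : ℕ} {b : Fin n → ℕ} {π : Equiv.Perm (Fin n)}
    (h : ContainsIn b π p312) :
    ∃ a p q : Fin n, a < p ∧ p < q ∧ π p < π q ∧ π q < π a ∧ (q : ℕ) + 1 ≤ b (π p) := by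
  obtain ⟨f, hf, ho, hin⟩ := h
  exact ⟨f 0, f 1, f 2, hf (by decide), hf (by decide), (ho 1 2).1 (by decide),
    (ho 2 0).1 (by decide), hin 2 1⟩

/-- In a transversal, every `321` pattern lies inside the diagram. -/
lemma contains_321 {n : ℕ} {b : Fin n → ℕ} (hmono : Monotone b) {π : Equiv.Perm (Fin n)}
    (hπ : IsTransversal b π) {i j k : Fin n} (hij : i < j) (hjk : j < k)
    (h1 : π j < π i) (h2 : π k < π j) : ContainsIn b π p321 := by
  have hk : ∀ s : Fin 3, (![i, j, k] s) ≤ k := by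
    intro s
    fin_cases s
    · exact (hij.trans hjk).le
    · exact hjk.le
    · exact le_refl _
  have hv : ∀ s : Fin 3, π k ≤ π (![i, j, k] s) := by
    intro s
    fin_cases s
    · exact (h2.trans h1).le
    · exact h2.le
    · exact le_refl _
  refine ⟨![i, j, k], ?_, ?_, ?_⟩
  · intro s t hst
    fin_cases s <;> fin_cases t <;> simp at hst ⊢ <;> first | assumption | exact hij.trans hjk
  · have h3 := h2.trans h1
    intro s t
    fin_cases s <;> fin_cases t <;>
      simp [p321, h1, h2, h3, h1.le, h2.le, h3.le]
  · intro s t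
    have e1 : ((![i, j, k] s : Fin n) : ℕ) ≤ k := hk s
    have e2 := hmono (hv t)
    have e3 := hπ k
    omega

/-- A `321`-avoiding transversal is determined by its left-to-right maxima. At the first position
`i` where two such permutations differ, the larger entry lies below an earlier one and has the
smaller entry to its right. -/
lemma eq_of_shadow_eq {n : ℕ} {b : Fin n → ℕ} (hmono : Monotone b) {π ρ : Equiv.Perm (Fin n)}
    (hπ : IsTransversal b π) (hρ : IsTransversal b ρ) (hπ' : ¬ ContainsIn b π p321)
    (hρ' : ¬ ContainsIn b ρ p321) (h : shadow π = shadow ρ) : π = ρ := by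
  have key : ∀ σ τ : Equiv.Perm (Fin n), IsTransversal b τ → ¬ ContainsIn b τ p321 →
      shadow σ = shadow τ → ∀ i, (∀ k < i, σ k = τ k) → ¬ σ i < τ i := by
    intro σ τ hτ hτ' hs i hi hlt
    have hmem : (i, τ i) ∈ shadow σ := by
      rw [hs]
      exact ⟨i, le_refl _, le_refl _⟩
    obtain ⟨k, hk, hk'⟩ := (mem_shadow σ i (τ i)).1 hmem
    have hki : k < i := by
      refine lt_of_le_of_ne hk ?_
      rintro rfl
      exact absurd hlt (not_lt.2 hk')
    rw [hi k hki] at hk'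
    have hki' : τ i < τ k := lt_of_le_of_ne hk' fun e => hki.ne' (τ.injective e)
    have hm : τ (τ.symm (σ i)) = σ i := τ.apply_symm_apply _
    have him : i < τ.symm (σ i) := by
      by_contra hcon
      rcases lt_or_eq_of_le (not_lt.1 hcon) with hc | hc
      · have := hi _ hc
        rw [hm] at this
        exact hc.ne (σ.injective this)
      · rw [hc] at hm
        exact hlt.ne hm.symm
    exact hτ' (contains_321 hmono hτ hki him hki' (by rw [hm]; exact hlt))
  have all : ∀ m : ℕ, ∀ i : Fin n, (i : ℕ) = m → π i = ρ i := by
    intro m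
    induction m using Nat.strong_induction_on with
    | _ m ih =>
      intro i him
      have hi : ∀ k < i, π k = ρ k := fun k hk => ih k (by rw [← him]; exact hk) k rfl
      exact le_antisymm
        (not_lt.1 (key ρ π hπ hπ' h.symm i fun k hk => (hi k hk).symm))
        (not_lt.1 (key π ρ hρ hρ' h i hi))
  exact Equiv.ext fun i => all i i rfl

/-! ### `312`-avoiders in every class -/

/-- Exchanging two entries below and to the right of the dot in column `a` does not change the
left-to-right maxima. -/
lemma shadow_mul_swap_subset {n : ℕ} (π : Equiv.Perm (Fin n)) {a p q : Fin n}
    (hap : a < p) (haq : a < q) (hp : π p < π a) (hq : π q < π a) :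
    shadow (π * Equiv.swap p q) ⊆ shadow π := by
  rintro ⟨i, v⟩ ⟨k, hk, hv⟩
  simp only at hk hv
  by_cases h1 : k = p
  · subst h1
    rw [Equiv.Perm.mul_apply, Equiv.swap_apply_left] at hv
    exact ⟨a, hap.le.trans hk, hv.trans hq.le⟩
  by_cases h2 : k = q
  · subst h2
    rw [Equiv.Perm.mul_apply, Equiv.swap_apply_right] at hv
    exact ⟨a, haq.le.trans hk, hv.trans hp.le⟩
  · rw [Equiv.Perm.mul_apply, Equiv.swap_apply_of_ne_of_ne h1 h2] at hv
    exact ⟨k, hk, hv⟩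

lemma shadow_mul_swap {n : ℕ} (π : Equiv.Perm (Fin n)) {a p q : Fin n}
    (hap : a < p) (haq : a < q) (hp : π p < π a) (hq : π q < π a) :
    shadow (π * Equiv.swap p q) = shadow π := by
  refine subset_antisymm (shadow_mul_swap_subset π hap haq hp hq) ?_
  have ha : (π * Equiv.swap p q) a = π a := by
    rw [Equiv.Perm.mul_apply, Equiv.swap_apply_of_ne_of_ne hap.ne haq.ne]
  have h := shadow_mul_swap_subset (π * Equiv.swap p q) hap haq
    (by rw [ha, Equiv.Perm.mul_apply, Equiv.swap_apply_left]; exact hq)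
    (by rw [ha, Equiv.Perm.mul_apply, Equiv.swap_apply_right]; exact hp)
  rwa [mul_assoc, Equiv.swap_mul_self, mul_one] at h

lemma sum_mul_swap_lt {n : ℕ} (π : Equiv.Perm (Fin n)) {p q : Fin n} (hpq : p < q)
    (h : π p < π q) :
    ∑ i : Fin n, (i : ℕ) * ((π * Equiv.swap p q) i : ℕ) < ∑ i : Fin n, (i : ℕ) * (π i : ℕ) := by
  have hq : q ∈ Finset.univ.erase p := Finset.mem_erase.2 ⟨hpq.ne', Finset.mem_univ _⟩
  rw [← Finset.add_sum_erase _ _ (Finset.mem_univ p), ← Finset.add_sum_erase _ _ hq,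
    ← Finset.add_sum_erase _ (fun i : Fin n => (i : ℕ) * (π i : ℕ)) (Finset.mem_univ p),
    ← Finset.add_sum_erase _ (fun i : Fin n => (i : ℕ) * (π i : ℕ)) hq]
  have hrest : ∑ x ∈ (Finset.univ.erase p).erase q, (x : ℕ) * ((π * Equiv.swap p q) x : ℕ)
      = ∑ x ∈ (Finset.univ.erase p).erase q, (x : ℕ) * (π x : ℕ) := by
    refine Finset.sum_congr rfl fun x hx => ?_
    simp only [Finset.mem_erase, Finset.mem_univ, and_true] at hx
    rw [Equiv.Perm.mul_apply, Equiv.swap_apply_of_ne_of_ne hx.2 hx.1]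
  rw [hrest]
  simp only [Equiv.Perm.mul_apply, Equiv.swap_apply_left, Equiv.swap_apply_right]
  have h1 : (p : ℕ) < q := hpq
  have h2 : (π p : ℕ) < π q := h
  nlinarith

/-- The class of every transversal contains a `312`-avoider. -/
lemma exists_avoids_312 {n : ℕ} {b : Fin n → ℕ} (hmono : Monotone b) (π : Equiv.Perm (Fin n))
    (hπ : IsTransversal b π) :
    ∃ ρ : Equiv.Perm (Fin n), (IsTransversal b ρ ∧ ¬ ContainsIn b ρ p312) ∧
      shadow ρ = shadow π := by
  classical
  obtain ⟨ρ, hρ, hmin⟩ := Finset.exists_min_image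
    (Finset.univ.filter fun ρ : Equiv.Perm (Fin n) => IsTransversal b ρ ∧ shadow ρ = shadow π)
    (fun ρ => ∑ i : Fin n, (i : ℕ) * (ρ i : ℕ)) ⟨π, by simp [hπ]⟩
  simp only [Finset.mem_filter, Finset.mem_univ, true_and] at hρ hmin
  refine ⟨ρ, ⟨hρ.1, fun hc => ?_⟩, hρ.2⟩
  obtain ⟨a, p, q, hap, hpq, h1, h2, hin⟩ := exists_of_contains_312 hc
  refine absurd (hmin (ρ * Equiv.swap p q) ⟨?_, ?_⟩) (not_le.2 (sum_mul_swap_lt ρ hpq h1))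
  · intro k
    rw [Equiv.Perm.mul_apply]
    by_cases hkp : k = p
    · subst hkp
      rw [Equiv.swap_apply_left]
      have := hmono h1.le
      have := hρ.1 k
      omega
    by_cases hkq : k = q
    · subst hkq
      rw [Equiv.swap_apply_right]
      exact hin
    · rw [Equiv.swap_apply_of_ne_of_ne hkp hkq]
      exact hρ.1 k
  · rw [shadow_mul_swap ρ hap (hap.trans hpq) (h1.trans h2) h2, hρ.2]

/-! ### Two `312`-avoiders in one class -/

/-- The one-line notation of the first of two `312`-avoiders in one class, for a critical point at
the (zero-indexed) row `j` of length `c`. On the columns `j, …, c` its values are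
`j+2, j+1, j+3, …, c-2, c, j, c-1`. -/
def witA (j c x : ℕ) : ℕ :=
  if x = j then j + 2
  else if x = j + 1 then j + 1
  else if x = c - 2 then c
  else if x = c - 1 then j
  else if x = c then c - 1
  else if j < x ∧ x < c then x + 1
  else x

/-- The one-line notation of the second `312`-avoider. On the columns `j, …, c` its values are
`j+2, j, j+3, …, c-2, c, c-1, j+1`. -/
def witB (j c x : ℕ) : ℕ :=
  if x = j then j + 2
  else if x = j + 1 then j
  else if x = c - 2 then c
  else if x = c - 1 then c - 1
  else if x = c then j + 1
  else if j < x ∧ x < c then x + 1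
  else x

/-- The values of `witA` at the three columns that are not left-to-right maxima. -/
lemma witA_values {j c : ℕ} (h4 : j + 4 ≤ c) :
    witA j c (j + 1) = j + 1 ∧ witA j c (c - 1) = j ∧ witA j c c = c - 1 := by
  refine ⟨?_, ?_, ?_⟩ <;> unfold witA <;> split_ifs <;> omega

lemma witA_inversion {j c : ℕ} (h4 : j + 4 ≤ c) (x y : ℕ) :
    x < y → witA j c y < witA j c x →
      (y = j + 1 ∧ witA j c x = j + 2) ∨ y = c - 1 ∨ y = c := by
  unfold witA
  split_ifs <;> omega

lemma witA_injective {j c : ℕ} (h4 : j + 4 ≤ c) (x y : ℕ) :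
    witA j c x = witA j c y → x = y := by
  unfold witA
  split_ifs <;> omega

lemma witA_312 {j c : ℕ} (h4 : j + 4 ≤ c) (x y z : ℕ) (hxy : x < y) (hyz : y < z)
    (h1 : witA j c y < witA j c z) (h2 : witA j c z < witA j c x) :
    witA j c y = j ∧ c ≤ z := by
  obtain ⟨e1, e2, e3⟩ := witA_values h4
  rcases witA_inversion h4 x y hxy (h1.trans h2) with ⟨rfl, hx⟩ | rfl | rfl <;>
    rcases witA_inversion h4 x z (hxy.trans hyz) h2 with ⟨rfl, hx'⟩ | rfl | rfl <;>
    omega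

/-- The values of `witB` at the three columns that are not left-to-right maxima. -/
lemma witB_values {j c : ℕ} (h4 : j + 4 ≤ c) :
    witB j c (j + 1) = j ∧ witB j c (c - 1) = c - 1 ∧ witB j c c = j + 1 := by
  refine ⟨?_, ?_, ?_⟩ <;> unfold witB <;> split_ifs <;> omega

lemma witB_inversion {j c : ℕ} (h4 : j + 4 ≤ c) (x y : ℕ) :
    x < y → witB j c y < witB j c x →
      (y = j + 1 ∧ witB j c x = j + 2) ∨ y = c - 1 ∨ y = c := by
  unfold witB
  split_ifs <;> omega

lemma witB_injective {j c : ℕ} (h4 : j + 4 ≤ c) (x y : ℕ) :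
    witB j c x = witB j c y → x = y := by
  unfold witB
  split_ifs <;> omega

lemma witB_312 {j c : ℕ} (h4 : j + 4 ≤ c) (x y z : ℕ) (hxy : x < y) (hyz : y < z)
    (h1 : witB j c y < witB j c z) (h2 : witB j c z < witB j c x) :
    witB j c y = j ∧ c ≤ z := by
  obtain ⟨e1, e2, e3⟩ := witB_values h4
  rcases witB_inversion h4 x y hxy (h1.trans h2) with ⟨rfl, hx⟩ | rfl | rfl <;>
    rcases witB_inversion h4 x z (hxy.trans hyz) h2 with ⟨rfl, hx'⟩ | rfl | rfl <;>
    omega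

lemma witA_dominated {j c : ℕ} (h4 : j + 4 ≤ c) (x : ℕ) :
    ∃ y, y ≤ x ∧ witA j c x ≤ witB j c y := by
  obtain ⟨e1, e2, e3⟩ := witA_values h4
  -- The entry in column `j + 1` lies below the one in column `j`; those in columns `c - 1` and `c`
  -- lie below the one in column `c - 2`; the two permutations agree in all other columns.
  have hj : witB j c j = j + 2 := by simp [witB]
  have hc : witB j c (c - 2) = c := by
    unfold witB
    split_ifs <;> omega
  by_cases h1 : x = j + 1
  · exact ⟨j, by omega, by rw [h1]; omega⟩
  by_cases h2 : x = c - 1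
  · exact ⟨c - 2, by omega, by rw [h2]; omega⟩
  by_cases h3 : x = c
  · exact ⟨c - 2, by omega, by rw [h3]; omega⟩
  · exact ⟨x, le_refl _, by simp only [witA, witB, h1, h2, h3, if_false]; exact le_refl _⟩

lemma witB_dominated {j c : ℕ} (h4 : j + 4 ≤ c) (x : ℕ) :
    ∃ y, y ≤ x ∧ witB j c x ≤ witA j c y := by
  obtain ⟨e1, e2, e3⟩ := witB_values h4
  -- The entry in column `j + 1` lies below the one in column `j`; those in columns `c - 1` and `c`
  -- lie below the one in column `c - 2`; the two permutations agree in all other columns.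
  have hj : witA j c j = j + 2 := by simp [witA]
  have hc : witA j c (c - 2) = c := by
    unfold witA
    split_ifs <;> omega
  by_cases h1 : x = j + 1
  · exact ⟨j, by omega, by rw [h1]; omega⟩
  by_cases h2 : x = c - 1
  · exact ⟨c - 2, by omega, by rw [h2]; omega⟩
  by_cases h3 : x = c
  · exact ⟨c - 2, by omega, by rw [h3]; omega⟩
  · exact ⟨x, le_refl _, by simp only [witA, witB, h1, h2, h3, if_false]; exact le_refl _⟩

/-- Realizes one-line notation `g` as a permutation `π`, which is a `312`-avoiding transversal.
The hypothesis `htr` says that each dot is weakly above the diagonal, or in a row at least `j` and a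
column less than `c`, or in a row greater than `j` and a column at most `c`; all of these lie in the
diagram. The hypothesis `hav` says that each `312` pattern has its `1` in row `j` and its `2` in
column `c` or further right, hence does not lie inside the diagram. -/
lemma exists_perm_of_witness {n : ℕ} {b : Fin n → ℕ} (hmono : Monotone b)
    (hb : ∀ y : Fin n, (y : ℕ) + 1 ≤ b y ∧ b y ≤ n) {j c : ℕ} (h : j + 1 < n)
    (hc : b ⟨j, Nat.lt_of_succ_lt h⟩ = c) (hc' : c < b ⟨j + 1, h⟩) (g : ℕ → ℕ)
    (hlt : ∀ x, x < n → g x < n) (hinj : ∀ x y, g x = g y → x = y)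
    (htr : ∀ x, x ≤ g x ∨ (j ≤ g x ∧ x < c) ∨ (j + 1 ≤ g x ∧ x ≤ c))
    (hav : ∀ x y z, x < y → y < z → g y < g z → g z < g x → g y = j ∧ c ≤ z) :
    ∃ π : Equiv.Perm (Fin n), (∀ x, (π x : ℕ) = g x) ∧
      IsTransversal b π ∧ ¬ ContainsIn b π p312 := by
  let g' : Fin n → Fin n := fun x => ⟨g x, hlt x x.2⟩
  have hg' : Function.Injective g' := fun x y hxy =>
    Fin.ext (hinj _ _ (congrArg Fin.val hxy))
  let π : Equiv.Perm (Fin n) := Equiv.ofBijective g' (Finite.injective_iff_bijective.1 hg')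
  have hval : ∀ x, (π x : ℕ) = g x := fun _ => rfl
  refine ⟨π, hval, ?_, ?_⟩
  · intro x
    have hx := hval x
    rcases htr x with h0 | h0 | h0
    · have := (hb (π x)).1
      omega
    · have : b ⟨j, Nat.lt_of_succ_lt h⟩ ≤ b (π x) := hmono (Fin.mk_le_of_le_val (by omega))
      omega
    · have : b ⟨j + 1, h⟩ ≤ b (π x) := hmono (Fin.mk_le_of_le_val (by omega))
      omega
  · intro hcon
    obtain ⟨x, y, z, hxy, hyz, h1, h2, hin⟩ := exists_of_contains_312 hcon
    obtain ⟨e1, e2⟩ := hav x y z hxy hyz h1 h2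
    have : π y = ⟨j, Nat.lt_of_succ_lt h⟩ := Fin.ext ((hval y).trans e1)
    rw [this] at hin
    omega

/-- If every entry of `π` is dominated by an entry of `ρ` that is not further right, then the shadow
of `π` is contained in that of `ρ`. -/
lemma shadow_subset {n : ℕ} {π ρ : Equiv.Perm (Fin n)} (g g' : ℕ → ℕ)
    (hπ : ∀ x, (π x : ℕ) = g x) (hρ : ∀ x, (ρ x : ℕ) = g' x)
    (h : ∀ x, ∃ y, y ≤ x ∧ g x ≤ g' y) : shadow π ⊆ shadow ρ := by
  rintro ⟨i, v⟩ ⟨k, hk, hv⟩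
  obtain ⟨y, hy, hy'⟩ := h k
  refine ⟨⟨y, lt_of_le_of_lt hy k.2⟩, le_trans (Fin.mk_le_of_le_val hy) hk, ?_⟩
  have h1 := hπ k
  have h2 := hρ ⟨y, lt_of_le_of_lt hy k.2⟩
  have h3 : (v : ℕ) ≤ π k := hv
  change (v : ℕ) ≤ _
  simp only at h2
  omega

lemma exists_two_avoiders {n : ℕ} {b : Fin n → ℕ} (hmono : Monotone b)
    (hb : ∀ y : Fin n, (y : ℕ) + 1 ≤ b y ∧ b y ≤ n) {j : ℕ} (h : j + 1 < n)
    (hlt : b ⟨j, Nat.lt_of_succ_lt h⟩ < b ⟨j + 1, h⟩)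
    (h4 : j + 4 ≤ b ⟨j, Nat.lt_of_succ_lt h⟩) :
    ∃ π ρ : Equiv.Perm (Fin n), (IsTransversal b π ∧ ¬ ContainsIn b π p312) ∧
      (IsTransversal b ρ ∧ ¬ ContainsIn b ρ p312) ∧ shadow π = shadow ρ ∧ π ≠ ρ := by
  obtain ⟨c, hc⟩ : ∃ c, b ⟨j, Nat.lt_of_succ_lt h⟩ = c := ⟨_, rfl⟩
  rw [hc] at hlt h4
  have hcn : c < n := lt_of_lt_of_le hlt (hb _).2
  obtain ⟨π, hπ, hπ'⟩ := exists_perm_of_witness hmono hb h hc hlt (witA j c)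
    (by intro x hx; unfold witA; split_ifs <;> omega)
    (witA_injective h4)
    (by intro x; unfold witA; split_ifs <;> omega)
    (witA_312 h4)
  obtain ⟨ρ, hρ, hρ'⟩ := exists_perm_of_witness hmono hb h hc hlt (witB j c)
    (by intro x hx; unfold witB; split_ifs <;> omega)
    (witB_injective h4)
    (by intro x; unfold witB; split_ifs <;> omega)
    (witB_312 h4)
  refine ⟨π, ρ, hπ', hρ', subset_antisymm (shadow_subset _ _ hπ hρ (witA_dominated h4))
    (shadow_subset _ _ hρ hπ (witB_dominated h4)), ?_⟩
  · intro e
    have h1 := hπ ⟨j + 1, h⟩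
    have h2 := hρ ⟨j + 1, h⟩
    rw [e, h2] at h1
    simp [witA, witB] at h1

/-! ### Comparison of the two counts -/

theorem stmt12 (n : ℕ) (b : Fin n → ℕ) (hmono : Monotone b)
    (hb : ∀ y : Fin n, (y : ℕ) + 1 ≤ b y ∧ b y ≤ n)
    (hcrit : ∃ (j : ℕ) (h : j + 1 < n),
      b ⟨j, Nat.lt_of_succ_lt h⟩ < b ⟨j + 1, h⟩ ∧ j + 4 ≤ b ⟨j, Nat.lt_of_succ_lt h⟩) :
    SYcard b p321 < SYcard b p312 := by
  classical
  obtain ⟨j, h, hlt, h4⟩ := hcrit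
  obtain ⟨π, ρ, hπ, hρ, hs, hne⟩ := exists_two_avoiders hmono hb h hlt h4
  let A : Finset (Equiv.Perm (Fin n)) :=
    Finset.univ.filter fun π => IsTransversal b π ∧ ¬ ContainsIn b π p321
  let B : Finset (Equiv.Perm (Fin n)) :=
    Finset.univ.filter fun π => IsTransversal b π ∧ ¬ ContainsIn b π p312
  have hA : SYcard b p321 = A.card := by
    rw [SYcard, Nat.card_eq_fintype_card, Fintype.card_subtype]
  have hB : SYcard b p312 = B.card := by
    rw [SYcard, Nat.card_eq_fintype_card, Fintype.card_subtype]
  rw [hA, hB]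
  have h1 : (A.image shadow).card = A.card := by
    refine Finset.card_image_of_injOn fun σ hσ τ hτ hst => ?_
    have hσ' := (Finset.mem_filter.1 hσ).2
    have hτ' := (Finset.mem_filter.1 hτ).2
    exact eq_of_shadow_eq hmono hσ'.1 hτ'.1 hσ'.2 hτ'.2 hst
  have h2 : A.image shadow ⊆ B.image shadow := by
    intro s hs
    obtain ⟨σ, hσ, rfl⟩ := Finset.mem_image.1 hs
    obtain ⟨τ, hτ, hτ'⟩ := exists_avoids_312 hmono σ (Finset.mem_filter.1 hσ).2.1
    exact Finset.mem_image.2 ⟨τ, Finset.mem_filter.2 ⟨Finset.mem_univ _, hτ⟩, hτ'⟩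
  have h3 : (B.image shadow).card < B.card := by
    refine lt_of_le_of_ne Finset.card_image_le fun e => hne ?_
    exact Finset.card_image_iff.1 e
      (Finset.mem_coe.2 (Finset.mem_filter.2 ⟨Finset.mem_univ _, hπ⟩))
      (Finset.mem_coe.2 (Finset.mem_filter.2 ⟨Finset.mem_univ _, hρ⟩)) hs
  have h4 := Finset.card_le_card h2
  omega
end

section
/- For every Young diagram Y, |S_Y(321)| ≤ |S_Y(312)|. -/
/-!
Read the boundary path of the diagram, starting at its bottom left corner. Each column step appends
the entry of that column to the word of dots whose row is not yet completed, and each row step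
deletes the smallest entry of this word. An occurrence of `312` lies in the diagram exactly when it
is visible in one of these words, while `321` in the diagram is the same as `321` in the
permutation, because the corner of an occurrence is one of its dots.

A `312`-avoiding word is a plane forest (`Forest`), with positions in postorder and values in
preorder. Appending an entry adds a new root above the last few trees (`RS`), and deleting the
minimum removes the first root and promotes its children (`DS`). Let `gct n b F` be the number of
histories of this kind along the diagram `b` that start from the forest `F`. Inserting the smallest
value back, row by row, turns histories into `312`-avoiding transversals, so there are at least
`gct n b nil` of these (`gct_le_cnt`).

For `321`, let `N(b, j)` be the number of `321`-avoiding transversals increasing on the first `j`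
columns. With the bottom row and its column removed from `b` giving `b'`, looking at a descent
between columns `j` and `j + 1` yields `N(b, j) ≤ N(b, j + 1) + N(b', j - 1)` when `0 < j < b 0`,
and `N(b, b 0) ≤ N(b', b 0 - 1)` (`card_good_desc`, `card_good_last`). The claim
`N(b, j) ≤ gct n b (j leaves)` follows (`card_good_le`) once `gct` is shown to satisfy the
reverse inequality (`key_ineq`).

For that inequality, `gct` is monotone under the rotation by which a vertex hands its last subtrees
over to be its right siblings (`gct_mon`). The forests reached from `s` leaves by appending are
grouped into families with a fixed left spine and varying numbers of leaves in the gaps along the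
spine (`QS`); the families are closed under appending (`QS_step`), and after the last append a
rotation compares those with empty innermost gap to those where the first root has been deleted
(`QS_Z_le`, `QS_main`).
-/

open Equiv

namespace Shape312

/-! ### Plane forests and the append and delete operations -/

/-- Plane forests: `node L R` is the forest whose first tree has the forest `L` hanging below its
root, followed by the trees of `R`. A forest encodes a `312`-avoiding word, positions being read in
postorder and values in preorder. -/
inductive Forest : Type
  | nil : Forest
  | node : Forest → Forest → Forest

namespace Forest

/-- Number of vertices. -/
def sz : Forest → ℕ
  | nil => 0
  | node L R => sz L + sz R + 1

/-- Juxtaposition of forests. -/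
def app : Forest → Forest → Forest
  | nil, B => B
  | node L R, B => node L (app R B)

/-- `ap s F` is `F` preceded by `s` one-vertex trees. -/
def ap : ℕ → Forest → Forest
  | 0, F => F
  | s + 1, F => node nil (ap s F)

end Forest

open Forest

theorem sz_app (A B : Forest) : (app A B).sz = A.sz + B.sz := by
  induction A with
  | nil => simp [app, sz]
  | node L R _ ih => simp [app, sz, ih]; omega

theorem app_assoc (A B C : Forest) : app (app A B) C = app A (app B C) := by
  induction A with
  | nil => rfl
  | node L R _ ih => simp [app, ih]

theorem sz_ap (s : ℕ) (F : Forest) : (ap s F).sz = s + F.sz := by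
  induction s with
  | zero => simp [ap]
  | succ s ih => simp [ap, sz, ih]; omega

theorem ap_leaf (s : ℕ) (X : Forest) : ap s (node nil X) = ap (s + 1) X := by
  induction s with
  | zero => rfl
  | succ s ih => rw [ap, ih]; rfl

theorem ap_app (s : ℕ) (X : Forest) : app (ap s nil) X = ap s X := by
  induction s with
  | zero => rfl
  | succ s ih => simp [ap, app, ih]

/-- Append: the sum of `φ` over all forests obtained from `F` by adding a new last vertex (in
postorder), whose children are the last `t` trees of `F`, for `t` from `0` to the number of
trees. -/
def RS : Forest → (Forest → ℕ) → ℕ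
  | nil, φ => φ (node nil nil)
  | node L R, φ => φ (node (node L R) nil) + RS R (fun B => φ (node L B))

/-- The summation `RS` iterated `a` times. -/
def RI : ℕ → (Forest → ℕ) → Forest → ℕ
  | 0, φ, F => φ F
  | a + 1, φ, F => RS F (RI a φ)

/-- Delete: evaluate `φ` after removing the root of the first tree, which is the first vertex in
preorder; the value is `0` when there is nothing to remove. -/
def DS (φ : Forest → ℕ) : Forest → ℕ
  | nil => 0
  | node L R => φ (app L R)

theorem RS_mono_fun (F : Forest) {φ ψ : Forest → ℕ} (h : ∀ G, φ G ≤ ψ G) : RS F φ ≤ RS F ψ := by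
  induction F generalizing φ ψ with
  | nil => exact h _
  | node L R _ ih => exact Nat.add_le_add (h _) (ih fun _ => h _)

theorem RS_congr (F : Forest) {φ ψ : Forest → ℕ}
    (h : ∀ G, G.sz = F.sz + 1 → φ G = ψ G) : RS F φ = RS F ψ := by
  induction F generalizing φ ψ with
  | nil => exact h _ rfl
  | node L R _ ih =>
    simp only [RS]
    rw [h _ (by simp [sz]), ih (ψ := fun B => ψ (node L B))]
    intro G hG
    exact h _ (by simp [sz, hG]; omega)

theorem RS_add (F : Forest) (φ ψ : Forest → ℕ) :
    RS F (fun G => φ G + ψ G) = RS F φ + RS F ψ := by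
  induction F generalizing φ ψ with
  | nil => rfl
  | node L R _ ih => simp only [RS, ih]; omega

theorem RS_mul (F : Forest) (k : ℕ) (φ : Forest → ℕ) :
    RS F (fun G => k * φ G) = k * RS F φ := by
  induction F generalizing φ with
  | nil => rfl
  | node L R _ ih => simp only [RS, ih]; ring

theorem RS_sum {ι : Type*} (F : Forest) (s : Finset ι) (φ : ι → Forest → ℕ) :
    RS F (fun G => ∑ i ∈ s, φ i G) = ∑ i ∈ s, RS F (φ i) := by
  induction F generalizing φ with
  | nil => rfl
  | node L R _ ih => simp only [RS, ih, Finset.sum_add_distrib]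

theorem RS_app_le (A B : Forest) (φ : Forest → ℕ) :
    RS B (fun G => φ (app A G)) ≤ RS (app A B) φ := by
  induction A generalizing φ with
  | nil => exact le_rfl
  | node L R _ ih =>
    simp only [app, RS]
    exact (ih (fun G => φ (node L G))).trans (Nat.le_add_left _ _)

/-! ### The rotation order -/

/-- One rotation somewhere in the forest: some vertex hands its last few subtrees over to become
its immediate right siblings. -/
inductive Le : Forest → Forest → Prop
  | rot (C A B : Forest) : Le (node (app C A) B) (node C (app A B))
  | left {A A' : Forest} (B : Forest) : Le A A' → Le (node A B) (node A' B)
  | right (A : Forest) {B C : Forest} : Le B C → Le (node A B) (node A C)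

/-- Monotonicity with respect to rotations. -/
def Mon (φ : Forest → ℕ) : Prop := ∀ F F', Le F F' → φ F ≤ φ F'

theorem Le.sz_eq {F F' : Forest} (h : Le F F') : F.sz = F'.sz := by
  induction h with
  | rot C A B => simp [sz, sz_app]; omega
  | left B _ ih => simp [sz, ih]
  | right A _ ih => simp [sz, ih]

theorem Le.app_right {A A' : Forest} (B : Forest) (h : Le A A') : Le (app A B) (app A' B) := by
  induction h with
  | rot C A D => simp only [app, app_assoc]; exact Le.rot _ _ _
  | left D h _ => exact Le.left _ h
  | right A _ ih => exact Le.right _ ih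

theorem Le.app_left (A : Forest) {B B' : Forest} (h : Le B B') : Le (app A B) (app A B') := by
  induction A with
  | nil => exact h
  | node L R _ ih => exact Le.right _ ih

theorem Le.ap (s : ℕ) {B B' : Forest} (h : Le B B') : Le (ap s B) (ap s B') := by
  induction s with
  | zero => exact h
  | succ s ih => exact Le.right _ ih

theorem Mon.rs {φ : Forest → ℕ} (hφ : Mon φ) : Mon (fun F => RS F φ) := by
  intro F F' h
  induction h generalizing φ with
  | rot C A B =>
    simp only [RS]
    refine Nat.add_le_add (hφ _ _ (Le.left _ (Le.rot _ _ _))) ?_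
    refine le_trans ?_ (RS_app_le A B _)
    exact RS_mono_fun _ fun G => hφ _ _ (Le.rot _ _ _)
  | left B h _ =>
    exact Nat.add_le_add (hφ _ _ (Le.left _ (Le.left _ h)))
      (RS_mono_fun _ fun G => hφ _ _ (Le.left _ h))
  | right A h ih =>
    exact Nat.add_le_add (hφ _ _ (Le.left _ (Le.right _ h)))
      (ih (φ := fun G => φ (node A G)) fun _ _ h' => hφ _ _ (Le.right _ h'))

theorem Mon.ri {φ : Forest → ℕ} (hφ : Mon φ) (a : ℕ) : Mon (RI a φ) := by
  induction a with
  | zero => exact hφ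
  | succ a ih => exact ih.rs

theorem Mon.ds {φ : Forest → ℕ} (hφ : Mon φ) : Mon (DS φ) := by
  intro F F' h
  cases h with
  | rot C A B => simp [DS, app_assoc]
  | left B h => exact hφ _ _ (h.app_right _)
  | right A h => exact hφ _ _ (h.app_left _)

/-! ### Families of forests with a fixed left spine -/

/-- For a list `c = [X₀, …, X_k]` of forests, the sum of `φ` over the forests
`•^{x₀} [•^{x₁} [⋯ [•^{x_{k+1}}] X_k ⋯] X₁] X₀` with `x₀ + ⋯ + x_{k+1} = s`, weighted by
`β x_{k+1}`; here `•^x` stands for `x` leaves and `[F]` for a root with `F` below it. -/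
def QS (β : ℕ → ℕ) : List Forest → ℕ → (Forest → ℕ) → ℕ
  | [], s, φ => β s * φ (ap s nil)
  | X :: c, s, φ =>
    ∑ x ∈ Finset.range (s + 1), QS β c (s - x) (fun K => φ (ap x (node K X)))

/-- No restriction on the innermost gap. -/
def bH : ℕ → ℕ := fun _ => 1
/-- The innermost gap is positive. -/
def bG : ℕ → ℕ := fun s => if s = 0 then 0 else 1
/-- The innermost gap is zero. -/
def bZ : ℕ → ℕ := fun s => if s = 0 then 1 else 0

theorem QS_HGZ (c : List Forest) (s : ℕ) (φ : Forest → ℕ) :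
    QS bH c s φ = QS bG c s φ + QS bZ c s φ := by
  induction c generalizing s φ with
  | nil => by_cases h : s = 0 <;> simp [QS, bH, bG, bZ, h]
  | cons X c ih => simp only [QS, ih, Finset.sum_add_distrib]

theorem QS_add (β : ℕ → ℕ) (c : List Forest) (s : ℕ) (φ ψ : Forest → ℕ) :
    QS β c s (fun F => φ F + ψ F) = QS β c s φ + QS β c s ψ := by
  induction c generalizing s φ ψ with
  | nil => simp [QS, mul_add]
  | cons X c ih => simp only [QS, ih, Finset.sum_add_distrib]

theorem QS_sum {ι : Type*} (β : ℕ → ℕ) (c : List Forest) (s : ℕ) (t : Finset ι)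
    (φ : ι → Forest → ℕ) :
    QS β c s (fun F => ∑ i ∈ t, φ i F) = ∑ i ∈ t, QS β c s (φ i) := by
  induction c generalizing s φ with
  | nil => simp [QS, Finset.mul_sum]
  | cons X c ih => simp only [QS, ih]; rw [Finset.sum_comm]

theorem QS_RS (β : ℕ → ℕ) (c : List Forest) (s : ℕ) (X : Forest) (ψ : Forest → Forest → ℕ) :
    QS β c s (fun K => RS X (ψ K)) = RS X (fun X' => QS β c s (fun K => ψ K X')) := by
  induction c generalizing s ψ with
  | nil => simp only [QS, RS_mul]
  | cons Y c ih => simp only [QS, ih, RS_sum]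

/-- Appending a vertex to `•^x [K] X`: the new root gathers either trees of `X` only, or all of
`X`, the tree `[K]` and some of the leaves. -/
theorem RS_ap_node (x : ℕ) (K X : Forest) (φ : Forest → ℕ) :
    RS (ap x (node K X)) φ =
      RS X (fun X' => φ (ap x (node K X'))) +
      ∑ i ∈ Finset.range (x + 1), φ (ap i (node (ap (x - i) (node K X)) nil)) := by
  induction x generalizing φ with
  | zero => simp [ap, RS, add_comm]
  | succ x ih =>
    rw [Finset.sum_range_succ']
    simp only [ap, RS, ih, Nat.add_sub_add_right, Nat.sub_zero]
    omega

theorem RS_leaves (s : ℕ) (φ : Forest → ℕ) : RS (ap s nil) φ = QS bH [nil] s φ := by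
  induction s generalizing φ with
  | zero => simp [ap, RS, QS, bH]
  | succ s ih =>
    rw [QS, Finset.sum_range_succ']
    simp only [ap, RS, ih, QS, Nat.add_sub_add_right, Nat.sub_zero]
    simp [bH]
    omega

theorem QS_Z_nil (s : ℕ) (φ : Forest → ℕ) : QS bZ [nil] s φ = φ (ap (s + 1) nil) := by
  rw [QS, Finset.sum_range_succ, Finset.sum_eq_zero]
  · simp [QS, bZ, ap, ap_leaf]
  · intro x hx
    have : s - x ≠ 0 := by have := Finset.mem_range.1 hx; omega
    simp [QS, bZ, this]

theorem sum_triangle (s : ℕ) (F : ℕ → ℕ → ℕ → ℕ) :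
    ∑ x ∈ Finset.range (s + 1), ∑ i ∈ Finset.range (x + 1), F i (x - i) (s - x) =
      ∑ i ∈ Finset.range (s + 1), ∑ y ∈ Finset.range (s - i + 1), F i y (s - i - y) := by
  rw [Finset.sum_sigma', Finset.sum_sigma']
  refine Finset.sum_bij' (fun p _ => ⟨p.2, p.1 - p.2⟩) (fun p _ => ⟨p.1 + p.2, p.1⟩) ?_ ?_ ?_ ?_ ?_
  · rintro ⟨x, i⟩ h; simp at h ⊢; omega
  · rintro ⟨x, i⟩ h; simp at h ⊢; omega
  · rintro ⟨x, i⟩ h; simp at h ⊢; omega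
  · rintro ⟨x, i⟩ h; simp at h ⊢
  · rintro ⟨x, i⟩ h
    simp at h ⊢
    congr 1; omega

/-- The families summed over in `QS` are closed under appending a vertex: either the outermost
forest `X` changes, or the spine grows by one vertex. -/
theorem QS_step (β : ℕ → ℕ) (X : Forest) (c : List Forest) (s : ℕ) (φ : Forest → ℕ) :
    QS β (X :: c) s (fun F => RS F φ) =
      RS X (fun X' => QS β (X' :: c) s φ) + QS β (nil :: X :: c) s φ := by
  simp only [QS, RS_ap_node, QS_add, Finset.sum_add_distrib, QS_RS, RS_sum, QS_sum]
  congr 1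
  exact sum_triangle s fun i y z => QS β c z fun K => φ (ap i (node (ap y (node K X)) nil))

/-- The forests with innermost gap zero are dominated, in the rotation order, by those with a
positive innermost gap, one leaf more and a spine shorter by one. -/
theorem QS_Z_le (X : Forest) (c : List Forest) (s : ℕ) {φ : Forest → ℕ} (hφ : Mon φ) :
    QS bZ (X :: c) s φ ≤ QS bG c (s + 1) (fun K => φ (app K X)) := by
  induction c generalizing X s φ with
  | nil =>
    rw [QS.eq_2, Finset.sum_range_succ, Finset.sum_eq_zero]
    · simp [QS, bZ, bG, ap_app, ap, ap_leaf, app]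
    · intro x hx
      have : s - x ≠ 0 := by have := Finset.mem_range.1 hx; omega
      simp [QS, bZ, this]
  | cons Y c ih =>
    rw [QS, QS, Finset.sum_range_succ _ (s + 1)]
    refine le_trans (Finset.sum_le_sum fun x hx => ?_) (Nat.le_add_right _ _)
    have hx' : s + 1 - x = s - x + 1 := by have := Finset.mem_range.1 hx; omega
    rw [hx']
    refine (ih Y (s - x) (φ := fun K => φ (ap x (node K X)))
      fun _ _ h => hφ _ _ ((Le.left _ h).ap x)).trans ?_
    have key : ∀ K, φ (ap x (node (app K Y) X)) ≤ φ (app (ap x (node K Y)) X) := by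
      intro K
      have : app (ap x (node K Y)) X = ap x (node K (app Y X)) := by
        rw [← ap_app x (node K Y), app_assoc, ap_app]; rfl
      rw [this]
      exact hφ _ _ ((Le.rot _ _ _).ap x)
    clear ih hx hx'
    generalize s - x + 1 = u
    have mono : ∀ (c : List Forest) (u : ℕ) (f g : Forest → ℕ), (∀ K, f K ≤ g K) →
        QS bG c u f ≤ QS bG c u g := by
      intro c
      induction c with
      | nil => intro u f g h; exact Nat.mul_le_mul_left _ (h _)
      | cons Z c ihc =>
        intro u f g h
        exact Finset.sum_le_sum fun _ _ => ihc _ _ _ fun _ => h _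
    exact mono _ _ _ _ key

/-- The main induction, on the number `a` of vertices still to be appended: unrestricted families with
`s` leaves are dominated by families with `s + 1` leaves, positive innermost gap and one deletion.
For `a = 0` the deletion either removes the leading leaf or opens the outermost spine vertex, and
`QS_Z_le` handles the latter; `QS_step` reduces `a + 1` to `a`. -/
theorem QS_main (a : ℕ) (X : Forest) (c : List Forest) (s : ℕ) {φ : Forest → ℕ} (hφ : Mon φ) :
    QS bH (X :: c) s (RI a φ) ≤ QS bG (X :: c) (s + 1) (RI a (DS φ)) := by
  induction a generalizing X c with
  | zero =>
    rw [QS_HGZ, show RI 0 φ = φ from rfl, show RI 0 (DS φ) = DS φ from rfl]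
    have h1 : QS bG (X :: c) (s + 1) (DS φ) =
        QS bG (X :: c) s φ + QS bG c (s + 1) (fun K => φ (app K X)) := by
      rw [QS, Finset.sum_range_succ']
      simp [QS, ap, DS, app]
    rw [h1]
    exact Nat.add_le_add_left (QS_Z_le X c s hφ) _
  | succ a ih =>
    have e : ∀ ψ, RI (a + 1) ψ = fun F => RS F (RI a ψ) := fun ψ => rfl
    rw [e, e, QS_step, QS_step]
    exact Nat.add_le_add (RS_mono_fun _ fun X' => ih X' c) (ih nil (X :: c))

/-- The recursive inequality: starting from `s + 1` leaves, appending `a + 1` vertices and then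
deleting one is worth at least the start from `s + 2` leaves with one vertex less to append, plus
the start from `s` leaves without the deletion. -/
theorem key_ineq (a s : ℕ) {φ : Forest → ℕ} (hφ : Mon φ) :
    RI a (DS φ) (ap (s + 2) nil) + RI (a + 1) φ (ap s nil) ≤
      RI (a + 1) (DS φ) (ap (s + 1) nil) := by
  rw [RI, RI, RS_leaves, RS_leaves, QS_HGZ _ (s + 1), QS_Z_nil, add_comm]
  exact Nat.add_le_add_right (QS_main a nil [] s hφ) _

/-! ### The number of histories -/

/-- The number of histories along the boundary of the diagram with row lengths `b`, starting from
the forest `F` on the first `F.sz` columns: before each row is completed, vertices are appended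
until the row length is reached, and then the vertex of that row is deleted. -/
def gct : (n : ℕ) → (Fin n → ℕ) → Forest → ℕ
  | 0, _, _ => 1
  | n + 1, b, F => RI (b 0 - F.sz) (DS (gct n fun y => b y.succ - 1)) F

/-- Histories are more numerous the higher the starting forest is in the rotation order. -/
theorem gct_mon (n : ℕ) (b : Fin n → ℕ) : Mon (gct n b) := by
  cases n with
  | zero => intro _ _ _; exact le_rfl
  | succ n =>
    intro F F' h
    simp only [gct, h.sz_eq]
    have : Mon (gct n fun y => b y.succ - 1) := gct_mon n _
    exact this.ds.ri _ _ _ h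

theorem RI_gct (n : ℕ) (b : Fin (n + 1) → ℕ) (c : ℕ) (F : Forest) (h : F.sz + c ≤ b 0) :
    RI c (gct (n + 1) b) F = gct (n + 1) b F := by
  induction c generalizing F with
  | zero => rfl
  | succ c ih =>
    rw [RI, RS_congr F (ψ := gct (n + 1) b) fun G hG => ih G (by omega)]
    have : b 0 - F.sz = (b 0 - (F.sz + 1)) + 1 := by omega
    rw [gct, this, RI]
    refine RS_congr F fun G hG => ?_
    rw [gct, hG]

/-! ### Inserting the smallest value into a permutation -/

/-- The permutation of length `n + 1` whose value in column `p` is the smallest one, and whose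
other entries are in the same relative order as `π`. -/
def ins {n : ℕ} (p : Fin (n + 1)) (π : Perm (Fin n)) : Perm (Fin (n + 1)) :=
  (finSuccEquiv' p).trans ((Equiv.optionCongr π).trans (finSuccEquiv' 0).symm)

@[simp] theorem ins_self {n : ℕ} (p : Fin (n + 1)) (π : Perm (Fin n)) : ins p π p = 0 := by
  simp [ins]

@[simp] theorem ins_succAbove {n : ℕ} (p : Fin (n + 1)) (π : Perm (Fin n)) (i : Fin n) :
    ins p π (p.succAbove i) = (π i).succ := by
  simp [ins]

theorem ins_inj {n : ℕ} {p q : Fin (n + 1)} {π ρ : Perm (Fin n)} (h : ins p π = ins q ρ) :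
    p = q ∧ π = ρ := by
  have hpq : p = q := by
    apply (ins p π).injective
    rw [ins_self, h, ins_self]
  subst hpq
  refine ⟨rfl, Equiv.ext fun i => ?_⟩
  have := congrArg (fun σ => σ (p.succAbove i)) h
  simpa using this

theorem exists_ins {n : ℕ} (σ : Perm (Fin (n + 1))) : ∃ p π, σ = ins p π := by
  have hb : Function.Bijective (fun x : Fin (n + 1) × Perm (Fin n) => ins x.1 x.2) := by
    rw [Fintype.bijective_iff_injective_and_card]
    refine ⟨fun x y h => Prod.ext (ins_inj h).1 (ins_inj h).2, ?_⟩
    simp [Fintype.card_perm, Nat.factorial_succ]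
  obtain ⟨x, hx⟩ := hb.2 σ
  exact ⟨x.1, x.2, hx.symm⟩

/-- The column of `p.succAbove i`, as a natural number. -/
theorem val_succAbove {n : ℕ} (p : Fin (n + 1)) (i : Fin n) :
    ((p.succAbove i : Fin (n + 1)) : ℕ) = if (i : ℕ) < p then (i : ℕ) else i + 1 := by
  simp only [Fin.succAbove, Fin.lt_def, Fin.val_castSucc]
  split_ifs <;> simp

theorem card_le_of_ins {n : ℕ} {P : Perm (Fin (n + 1)) → Prop} {Q : Perm (Fin n) → Prop}
    (hPQ : ∀ p π, P (ins p π) → Q π)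
    (hp : ∀ p q π, P (ins p π) → P (ins q π) → p = q) :
    Nat.card {σ // P σ} ≤ Nat.card {π // Q π} := by
  classical
  choose p π h using fun σ : Perm (Fin (n + 1)) => exists_ins σ
  refine Nat.card_le_card_of_injective
    (fun σ : {σ // P σ} => (⟨π σ.1, hPQ (p σ.1) _ (h σ.1 ▸ σ.2)⟩ : {π // Q π})) ?_
  rintro ⟨σ, hσ⟩ ⟨τ, hτ⟩ e
  have hval : π σ = π τ := congrArg Subtype.val e
  have h1 : P (ins (p σ) (π σ)) := h σ ▸ hσ
  have h2 : P (ins (p τ) (π σ)) := by rw [hval]; exact h τ ▸ hτ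
  apply Subtype.ext
  change σ = τ
  rw [h σ, h τ, hp _ _ _ h1 h2, hval]

/-! ### Counting transversals without a decreasing subsequence of length three -/

/-- Transversals without `321` whose entries in the first `j` columns are increasing. The diagram
plays no role for the pattern: the corner of an occurrence of `321` is one of its dots. -/
def Good (n : ℕ) (b : Fin n → ℕ) (j : ℕ) (π : Perm (Fin n)) : Prop :=
  IsTransversal b π ∧ (∀ i k l : Fin n, i < k → k < l → π l < π k → π k < π i → False) ∧
    ∀ i k : Fin n, i < k → (k : ℕ) < j → π i < π k

/-- Removing the bottom row and the column of its dot, which shortens all other rows by one. -/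
theorem good_ins_tail {n : ℕ} {b : Fin (n + 1) → ℕ} (hmono : Monotone b) {j j' : ℕ}
    {p : Fin (n + 1)} {π : Perm (Fin n)} (hg : Good (n + 1) b j (ins p π)) (hp : (p : ℕ) + 1 ≤ b 0)
    (hj : j' + 1 ≤ j) :
    Good n (fun y => b y.succ - 1) j' π := by
  obtain ⟨h1, h2, h3⟩ := hg
  refine ⟨fun i => ?_, fun i k l hik hkl h h' => ?_, fun i k hik hk => ?_⟩
  · have := h1 (p.succAbove i)
    rw [ins_succAbove, val_succAbove] at this
    have h0 : b 0 ≤ b (π i).succ := hmono (Fin.zero_le _)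
    simp only
    split_ifs at this <;> omega
  · refine h2 (p.succAbove i) (p.succAbove k) (p.succAbove l) ?_ ?_ ?_ ?_
    · simpa using hik
    · simpa using hkl
    · simpa using h
    · simpa using h'
  · have := h3 (p.succAbove i) (p.succAbove k) (by simpa using hik) (by
      rw [val_succAbove]; split_ifs <;> omega)
    simpa using this

/-- Shape of the diagram: monotone row lengths containing the staircase. -/
def Proper (n : ℕ) (b : Fin n → ℕ) : Prop :=
  Monotone b ∧ ∀ y : Fin n, (y : ℕ) + 1 ≤ b y ∧ b y ≤ n

theorem Proper.tail {n : ℕ} {b : Fin (n + 1) → ℕ} (h : Proper (n + 1) b) :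
    Proper n (fun y => b y.succ - 1) := by
  refine ⟨fun x y hxy => Nat.sub_le_sub_right (h.1 (Fin.succ_le_succ_iff.2 hxy)) 1, fun y => ?_⟩
  have := h.2 y.succ
  simp only [Fin.val_succ] at this
  simp only
  omega

/-- If all columns of the bottom row are increasing, the smallest value is in the first column. -/
theorem card_good_last {n : ℕ} {b : Fin (n + 1) → ℕ} (hb : Proper (n + 1) b) :
    Nat.card {π // Good (n + 1) b (b 0) π} ≤
      Nat.card {π // Good n (fun y => b y.succ - 1) (b 0 - 1) π} := by
  have h0 := (hb.2 0).1
  have key : ∀ p π, Good (n + 1) b (b 0) (ins p π) → (p : ℕ) = 0 := by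
    intro p π h
    by_contra hp
    have h1 := h.1 p
    rw [ins_self] at h1
    have := h.2.2 0 p (Fin.pos_iff_ne_zero.2 fun e => hp (by simp [e])) (by omega)
    simp at this
  refine card_le_of_ins (fun p π h => ?_) (fun p q π h h' => Fin.ext ?_)
  · have := key p π h
    exact good_ins_tail hb.1 h (by omega) (by omega)
  · rw [key q π h', key p π h]

/-- If the first descent is between columns `s` and `s + 1`, both of them in the bottom row, removing
the smallest value is injective: that value is in the first column or at the bottom of the descent,
and the remaining permutation tells which. -/
theorem card_good_desc {n : ℕ} {b : Fin (n + 1) → ℕ} (hb : Proper (n + 1) b) {s : ℕ}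
    (hs : s + 1 < b 0) :
    Nat.card {π // Good (n + 1) b (s + 1) π ∧ ¬ Good (n + 1) b (s + 2) π} ≤
      Nat.card {π // Good n (fun y => b y.succ - 1) s π} := by
  have hn := (hb.2 0).2
  have hs1 : s + 1 < n + 1 := by omega
  -- the columns of the descent
  set u : Fin (n + 1) := ⟨s, by omega⟩ with hu
  set v : Fin (n + 1) := ⟨s + 1, hs1⟩ with hv
  have desc : ∀ σ, Good (n + 1) b (s + 1) σ → ¬ Good (n + 1) b (s + 2) σ → σ v < σ u := by
    intro σ h h'
    by_contra hle
    have huv : σ u < σ v := by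
      refine lt_of_le_of_ne (not_lt.1 hle) fun e => ?_
      have := congrArg Fin.val (σ.injective e)
      simp [hu, hv] at this
    refine h' ⟨h.1, h.2.1, fun i k hik hk => ?_⟩
    rcases Nat.lt_or_ge (k : ℕ) (s + 1) with hk' | hk'
    · exact h.2.2 i k hik hk'
    · have hkv : k = v := Fin.ext (by simp [hv]; omega)
      subst hkv
      rcases Nat.lt_or_ge (i : ℕ) s with hi | hi
      · exact (h.2.2 i u hi (by simp [hu])).trans huv
      · have hiu : i = u := Fin.ext (by
          have : (i : ℕ) < s + 1 := hik
          simp [hu]; omega)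
        rw [hiu]; exact huv
  -- the smallest value sits in the first column or at the bottom of the descent
  have pos : ∀ p π, Good (n + 1) b (s + 1) (ins p π) → ¬ Good (n + 1) b (s + 2) (ins p π) →
      (p : ℕ) = 0 ∨ (p : ℕ) = s + 1 := by
    intro p π h h'
    have hd := desc _ h h'
    by_contra hp
    push Not at hp
    rcases Nat.lt_or_ge (p : ℕ) (s + 1) with hlt | hge
    · have := h.2.2 0 p (Fin.pos_iff_ne_zero.2 fun e => hp.1 (by simp [e])) hlt
      simp at this
    · refine h.2.1 u v p (by simp [hu, hv]) ?_ ?_ hd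
      · simp only [hv, Fin.lt_def]; omega
      · rw [ins_self, Fin.pos_iff_ne_zero]
        intro e
        have : v = p := (ins p π).injective (by rw [e, ins_self])
        exact hp.2 (by rw [← this])
  have det : ∀ (p q : Fin (n + 1)) (π : Perm (Fin n)), (p : ℕ) = 0 → (q : ℕ) = s + 1 →
      Good (n + 1) b (s + 1) (ins p π) → ¬ Good (n + 1) b (s + 2) (ins p π) → Good (n + 1) b (s + 1) (ins q π) → False := by
    intro p q π hp hq h h' h2
    have hd := desc _ h h'
    rcases Nat.eq_zero_or_pos s with hs0 | hs0
    · have : u = p := Fin.ext (by simp [hu, hp, hs0])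
      rw [this, ins_self] at hd
      simp at hd
    · have e1 : u = p.succAbove ⟨s - 1, by omega⟩ := Fin.ext (by
        rw [val_succAbove]; simp [hu, hp]; omega)
      have e2 : v = p.succAbove ⟨s, by omega⟩ := Fin.ext (by
        rw [val_succAbove]; simp [hv, hp])
      rw [e1, e2, ins_succAbove, ins_succAbove] at hd
      have := h2.2.2 (q.succAbove ⟨s - 1, by omega⟩) (q.succAbove ⟨s, by omega⟩)
        (by simp; omega) (by rw [val_succAbove]; simp [hq])
      rw [ins_succAbove, ins_succAbove] at this
      exact absurd hd (not_lt.2 this.le)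
  refine card_le_of_ins (fun p π h => ?_) (fun p q π h h' => Fin.ext ?_)
  · have := pos p π h.1 h.2
    exact good_ins_tail hb.1 h.1 (by omega) (by omega)
  · rcases pos p π h.1 h.2 with h1 | h1 <;> rcases pos q π h'.1 h'.2 with h2 | h2
    · omega
    · exact (det p q π h1 h2 h.1 h.2 h'.1).elim
    · exact (det q p π h2 h1 h'.1 h'.2 h.1).elim
    · omega

theorem card_split {α : Type*} [Finite α] (P Q : α → Prop) :
    Nat.card {x // P x} ≤ Nat.card {x // Q x} + Nat.card {x // P x ∧ ¬ Q x} := by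
  classical
  rw [← Nat.card_sum]
  refine Nat.card_le_card_of_injective (fun x : {x // P x} =>
    if h : Q x.1 then Sum.inl ⟨x.1, h⟩ else Sum.inr ⟨x.1, x.2, h⟩) ?_
  rintro ⟨x, hx⟩ ⟨y, hy⟩ e
  by_cases h : Q x <;> by_cases h' : Q y <;> simp [h, h'] at e <;> exact Subtype.ext e

/-- The recursion `card_good_last`, `card_good_desc` for `321` is dominated, through `key_ineq`, by
the number of histories that start from `j` leaves. -/
theorem card_good_le (n : ℕ) (b : Fin n → ℕ) (hb : Proper n b) (j : ℕ)
    (hj : ∀ h : 0 < n, j ≤ b ⟨0, h⟩) :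
    Nat.card {π // Good n b j π} ≤ gct n b (ap j nil) := by
  induction n generalizing j with
  | zero =>
    rw [gct, ← Nat.card_unique (α := Perm (Fin 0))]
    exact Nat.card_le_card_of_injective _ Subtype.val_injective
  | succ n ih =>
    have hj0 : j ≤ b 0 := hj (Nat.succ_pos n)
    clear hj
    have h0 := hb.2 0
    obtain ⟨a, ha⟩ : ∃ a, b 0 = j + a := ⟨b 0 - j, by omega⟩
    have tail0 : ∀ h : 0 < n, b 0 - 1 ≤ b (Fin.succ ⟨0, h⟩) - 1 := fun h =>
      Nat.sub_le_sub_right (hb.1 (Fin.zero_le _)) 1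
    induction a generalizing j with
    | zero =>
      have hjb : j = b 0 := by omega
      subst hjb
      refine (card_good_last hb).trans ((ih _ hb.tail _ tail0).trans (le_of_eq ?_))
      obtain ⟨s, hs⟩ : ∃ s, b 0 = s + 1 := ⟨b 0 - 1, by simp at h0; omega⟩
      rw [gct.eq_2, sz_ap, hs]
      simp [sz, RI, ap, DS, app]
    | succ a iha =>
      have step : ∀ F : Forest, F.sz = j → gct (n + 1) b F =
          RI (a + 1) (DS (gct n fun y => b y.succ - 1)) F := by
        intro F hF
        rw [gct, hF, ha, Nat.add_sub_cancel_left]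
      have IH := iha (j + 1) (by omega) (by omega)
      rcases Nat.eq_zero_or_pos j with hj | hj
      · subst hj
        refine le_trans ?_ (IH.trans (le_of_eq ?_))
        · refine Nat.card_le_card_of_injective
            (fun π : {π // Good (n + 1) b 0 π} =>
              (⟨π.1, π.2.1, π.2.2.1, fun i k hik hk => ?_⟩ : {π // Good (n + 1) b (0 + 1) π})) ?_
          · have : (i : ℕ) < k := hik
            omega
          · rintro ⟨x, hx⟩ ⟨y, hy⟩ e
            have e' := Subtype.ext_iff.1 e
            exact Subtype.ext e'
        · rw [step (ap 0 nil) (by simp [ap, sz]), gct.eq_2, sz_ap, ha]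
          simp [ap, sz, RI, RS]
      · obtain ⟨s, rfl⟩ : ∃ s, j = s + 1 := ⟨j - 1, by omega⟩
        cases n with
        | zero => simp at h0; omega
        | succ n =>
          refine (card_split _ (Good (n + 2) b (s + 2))).trans ?_
          rw [step _ (by simp [sz_ap, sz])]
          refine le_trans ?_ (key_ineq a s (gct_mon (n + 1) _))
          refine Nat.add_le_add (IH.trans (le_of_eq ?_)) ?_
          · rw [gct, sz_ap, ha]
            congr 1
            simp only [sz]; omega
          · refine (card_good_desc hb (by omega)).trans ?_
            have t := tail0 (Nat.succ_pos n)
            rw [RI_gct _ _ _ _ (by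
              rw [sz_ap]
              have : Fin.succ (0 : Fin (n + 1)) = Fin.succ ⟨0, Nat.succ_pos n⟩ := rfl
              simp only [sz, this]; omega)]
            exact ih _ hb.tail s fun h => by have := tail0 h; omega

/-! ### Words with a given forest shape -/

/-- The first `F.sz` entries of the word `v` are pairwise distinct and form the `312`-avoiding word
encoded by the forest `F`: for `node L R`, the root of the first tree sits in position `L.sz`, below
the entries of `L` in front of it, and all these entries are below those of `R`. -/
def Shape : (ℕ → ℕ) → Forest → Prop
  | _, nil => True
  | v, node L R => Shape v L ∧ Shape (fun i => v (L.sz + 1 + i)) R ∧ (∀ i < L.sz, v L.sz < v i) ∧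
      ∀ i ≤ L.sz, ∀ k < R.sz, v i < v (L.sz + 1 + k)

/-- The shape depends only on the relative order of the entries. -/
theorem Shape.congr {F : Forest} {v w : ℕ → ℕ} (h : Shape v F)
    (hvw : ∀ i < F.sz, ∀ k < F.sz, v i < v k → w i < w k) : Shape w F := by
  induction F generalizing v w with
  | nil => trivial
  | node L R ihL ihR =>
    obtain ⟨h1, h2, h3, h4⟩ := h
    simp only [sz] at hvw
    refine ⟨ihL h1 fun i hi k hk => hvw i (by omega) k (by omega),
      ihR h2 fun i hi k hk => hvw _ (by omega) _ (by omega),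
      fun i hi => hvw _ (by omega) _ (by omega) (h3 i hi),
      fun i hi k hk => hvw _ (by omega) _ (by omega) (h4 i hi k hk)⟩

/-- A word has at most one shape of a given size: the position of the smallest entry determines the
size of the first tree. -/
theorem Shape.unique {F G : Forest} {v : ℕ → ℕ} (hF : Shape v F) (hG : Shape v G)
    (h : F.sz = G.sz) : F = G := by
  induction F generalizing v G with
  | nil =>
    cases G with
    | nil => rfl
    | node L R => simp [sz] at h
  | node L R ihL ihR =>
    cases G with
    | nil => simp [sz] at h
    | node L' R' =>
      obtain ⟨h1, h2, h3, h4⟩ := hF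
      obtain ⟨g1, g2, g3, g4⟩ := hG
      simp only [sz] at h
      have e : L.sz = L'.sz := by
        rcases lt_trichotomy L.sz L'.sz with hlt | he | hlt
        · have a1 := g3 _ hlt
          have a2 := h4 L.sz le_rfl (L'.sz - L.sz - 1) (by omega)
          rw [show L.sz + 1 + (L'.sz - L.sz - 1) = L'.sz by omega] at a2
          omega
        · exact he
        · have a1 := h3 _ hlt
          have a2 := g4 L'.sz le_rfl (L.sz - L'.sz - 1) (by omega)
          rw [show L'.sz + 1 + (L.sz - L'.sz - 1) = L.sz by omega] at a2
          omega
      obtain rfl := ihL h1 g1 e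
      obtain rfl := ihR h2 g2 (by omega)
      rfl

theorem shape_app {A B : Forest} {v : ℕ → ℕ} (h : Shape v (app A B)) :
    Shape v A ∧ Shape (fun i => v (A.sz + i)) B ∧
      ∀ i < A.sz, ∀ k < B.sz, v i < v (A.sz + k) := by
  induction A generalizing v with
  | nil =>
    simp only [sz, Nat.zero_add]
    exact ⟨trivial, h, fun i hi => absurd hi (by omega)⟩
  | node L R _ ih =>
    obtain ⟨h1, h2, h3, h4⟩ := h
    obtain ⟨i1, i2, i3⟩ := ih h2
    rw [sz_app] at h4
    simp only [sz]
    refine ⟨⟨h1, i1, h3, fun i hi k hk => h4 i hi k (by omega)⟩, ?_, fun i hi k hk => ?_⟩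
    · convert i2 using 3; omega
    · rcases Nat.lt_or_ge L.sz i with hi' | hi'
      · have := i3 (i - (L.sz + 1)) (by omega) k hk
        convert this using 2 <;> omega
      · have := h4 i hi' (R.sz + k) (by omega)
        convert this using 2; omega

theorem RS_le (F : Forest) {φ ψ : Forest → ℕ}
    (h : ∀ G, G.sz = F.sz + 1 → φ G ≤ ψ G) : RS F φ ≤ RS F ψ := by
  induction F generalizing φ ψ with
  | nil => exact h _ rfl
  | node L R _ ih =>
    refine Nat.add_le_add (h _ (by simp [sz])) (ih fun G hG => ?_)
    exact h _ (by simp [sz, hG]; omega)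

theorem RS_zero (F : Forest) : RS F (fun _ => 0) = 0 := by
  induction F with
  | nil => rfl
  | node L R _ ih => simp [RS, ih]

open scoped Classical in
/-- A word whose prefix of size `F.sz + 1` has one of the shapes obtained by appending a vertex to
`F` has shape `F`, and only one of these shapes occurs. -/
theorem RS_shape (F : Forest) (v : ℕ → ℕ) :
    RS F (fun G => if Shape v G then 1 else 0) ≤ if Shape v F then 1 else 0 := by
  induction F generalizing v with
  | nil => simp [RS, Shape, sz]
  | node L R _ ih =>
    by_cases h : Shape v (node (node L R) nil)
    · have hz : RS R (fun B => if Shape v (node L B) then 1 else 0) = 0 := by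
        rw [RS_congr R (ψ := fun _ => 0), RS_zero]
        intro B hB
        refine if_neg fun hB' => ?_
        have := h.unique hB' (by simp only [sz, hB]; omega)
        injection this with h1 h2
        subst h2
        simp [sz] at hB
      have h' : Shape v (node L R) := h.1
      simp only [RS, hz, h, h', if_true]
      exact le_rfl
    · simp only [RS, h, if_false, Nat.zero_add]
      by_cases hQ : Shape v L ∧ (∀ i < L.sz, v L.sz < v i) ∧
          ∀ i ≤ L.sz, ∀ k < R.sz, v i < v (L.sz + 1 + k)
      · have e : Shape v (node L R) ↔ Shape (fun i => v (L.sz + 1 + i)) R :=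
          ⟨fun h => h.2.1, fun h => ⟨hQ.1, h, hQ.2.1, hQ.2.2⟩⟩
        simp only [e]
        refine le_trans (RS_le R fun B _ => ?_) (ih _)
        by_cases hB : Shape v (node L B)
        · have : Shape (fun i => v (L.sz + 1 + i)) B := hB.2.1
          simp [this, hB]
        · simp [hB]
      · rw [RS_congr R (ψ := fun _ => 0), RS_zero]
        · exact Nat.zero_le _
        · intro B hB
          refine if_neg fun hB' => hQ ⟨hB'.1, hB'.2.2.1, fun i hi k hk => ?_⟩
          exact hB'.2.2.2 i hi k (by omega)

/-! ### Counting transversals that avoid `312` -/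

/-- The sequence of values of `π` as a word on `ℕ`, with the junk value `0` beyond position `n`. -/
def word {n : ℕ} (π : Perm (Fin n)) (i : ℕ) : ℕ := if h : i < n then (π ⟨i, h⟩ : ℕ) else 0

/-- Transversals avoiding `312` in the diagram; the corner of an occurrence is in the row of the
smallest and the column of the last of its dots. -/
def Av312 (n : ℕ) (b : Fin n → ℕ) (π : Perm (Fin n)) : Prop :=
  IsTransversal b π ∧ ∀ i k l : Fin n, i < k → k < l → π k < π l → π l < π i →
    (l : ℕ) + 1 ≤ b (π k) → False

/-- The number of `312`-avoiding transversals whose first `F.sz` entries have shape `F`. -/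
noncomputable def cnt (n : ℕ) (b : Fin n → ℕ) (F : Forest) : ℕ :=
  Nat.card {π // Av312 n b π ∧ Shape (word π) F}

theorem RS_cnt (n : ℕ) (b : Fin n → ℕ) (F : Forest) : RS F (cnt n b) ≤ cnt n b F := by
  classical
  have e : cnt n b = fun G => ∑ π ∈ Finset.univ.filter (Av312 n b),
      if Shape (word π) G then 1 else 0 := by
    funext G
    rw [cnt, Nat.card_eq_fintype_card, Fintype.card_subtype, ← Finset.filter_filter,
      Finset.card_filter]
  rw [e, RS_sum]
  exact Finset.sum_le_sum fun π _ => RS_shape F (word π)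

theorem word_ins_lt {n : ℕ} (p : Fin (n + 1)) (π : Perm (Fin n)) {i : ℕ} (hi : i < p) :
    word (ins p π) i = word π i + 1 := by
  have hp := p.2
  have e : (⟨i, by omega⟩ : Fin (n + 1)) = p.succAbove ⟨i, by omega⟩ :=
    Fin.ext (by rw [val_succAbove]; simp [hi])
  rw [word, word, dif_pos (by omega), dif_pos (by omega), e, ins_succAbove, Fin.val_succ]

theorem word_ins_self {n : ℕ} (p : Fin (n + 1)) (π : Perm (Fin n)) : word (ins p π) p = 0 := by
  simp [word]

theorem word_ins_gt {n : ℕ} (p : Fin (n + 1)) (π : Perm (Fin n)) {i : ℕ} (hi : p ≤ i) (hn : i < n) :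
    word (ins p π) (i + 1) = word π i + 1 := by
  have e : (⟨i + 1, by omega⟩ : Fin (n + 1)) = p.succAbove ⟨i, hn⟩ :=
    Fin.ext (by rw [val_succAbove]; simp; omega)
  rw [word, word, dif_pos (by omega), dif_pos hn, e, ins_succAbove, Fin.val_succ]

theorem shape_ins {n : ℕ} {A B : Forest} (p : Fin (n + 1)) (π : Perm (Fin n)) (hp : (p : ℕ) = A.sz)
    (hn : A.sz + B.sz ≤ n) (h : Shape (word π) (app A B)) : Shape (word (ins p π)) (node A B) := by
  obtain ⟨h1, h2, h3⟩ := shape_app h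
  have lo : ∀ i < A.sz, word (ins p π) i = word π i + 1 := fun i hi => word_ins_lt p π (by omega)
  have mid : word (ins p π) A.sz = 0 := by rw [← hp]; exact word_ins_self p π
  have hi' : ∀ k < B.sz, word (ins p π) (A.sz + 1 + k) = word π (A.sz + k) + 1 := fun k hk => by
    rw [← word_ins_gt p π (i := A.sz + k) (by omega) (by omega)]
    congr 1; omega
  refine ⟨h1.congr fun i hi k hk hik => ?_, h2.congr fun i hi k hk hik => ?_, fun i hi => ?_,
    fun i hi k hk => ?_⟩
  · rw [lo i hi, lo k hk]; omega
  · rw [hi' i hi, hi' k hk]; omega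
  · rw [mid, lo i hi]; omega
  · rw [hi' k hk]
    rcases Nat.lt_or_ge i A.sz with h | h
    · rw [lo i h]; have := h3 i h k hk; omega
    · rw [show i = A.sz by omega, mid]; omega

/-- Inserting the smallest value at the root of the first tree creates no occurrence of `312`: in
the bottom row only the first `b 0` columns count, and these have the shape `node A B`. -/
theorem av_ins {n : ℕ} {b : Fin (n + 1) → ℕ} (hb : Proper (n + 1) b) {A B : Forest}
    (hs : (node A B).sz = b 0) {p : Fin (n + 1)} {π : Perm (Fin n)} (hp : (p : ℕ) = A.sz)
    (h : Av312 n (fun y => b y.succ - 1) π) (hsh : Shape (word π) (app A B)) :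
    Av312 (n + 1) b (ins p π) := by
  have hn := (hb.2 0).2
  simp only [sz] at hs
  have hnode := shape_ins p π hp (by omega) hsh
  have hle : ∀ y, b 0 ≤ b y := fun y => hb.1 (Fin.zero_le _)
  constructor
  · intro i
    rcases Fin.eq_self_or_eq_succAbove p i with rfl | ⟨i', rfl⟩
    · rw [ins_self]; omega
    · rw [ins_succAbove, val_succAbove]
      have h1 := h.1 i'
      simp only at h1
      split_ifs <;> omega
  · intro i k l hik hkl h1 h2 h3
    rcases Fin.eq_self_or_eq_succAbove p i with rfl | ⟨i', rfl⟩
    · rw [ins_self] at h2; simp at h2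
    rcases Fin.eq_self_or_eq_succAbove p l with rfl | ⟨l', rfl⟩
    · rw [ins_self] at h1; simp at h1
    rcases Fin.eq_self_or_eq_succAbove p k with rfl | ⟨k', rfl⟩
    · rw [ins_self] at h3
      have hl : ((k.succAbove l' : Fin (n + 1)) : ℕ) > A.sz := by rw [← hp]; exact hkl
      have hi : ((k.succAbove i' : Fin (n + 1)) : ℕ) < A.sz := by rw [← hp]; exact hik
      have := hnode.2.2.2 _ hi.le (((k.succAbove l' : Fin (n + 1)) : ℕ) - (A.sz + 1)) (by omega)
      rw [show A.sz + 1 + (((k.succAbove l' : Fin (n + 1)) : ℕ) - (A.sz + 1)) =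
        ((k.succAbove l' : Fin (n + 1)) : ℕ) by omega] at this
      simp only [word, Fin.is_lt, dif_pos, Fin.eta] at this
      exact absurd h2 (not_lt.2 (le_of_lt this))
    · refine h.2 i' k' l' (by simpa using hik) (by simpa using hkl) (by simpa using h1)
        (by simpa using h2) ?_
      rw [ins_succAbove, val_succAbove] at h3
      have := hle (π k').succ
      simp only
      split_ifs at h3 <;> omega

theorem cnt_delete {n : ℕ} {b : Fin (n + 1) → ℕ} (hb : Proper (n + 1) b) {A B : Forest}
    (hs : (node A B).sz = b 0) :
    cnt n (fun y => b y.succ - 1) (app A B) ≤ cnt (n + 1) b (node A B) := by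
  have hn := (hb.2 0).2
  have hs' := hs
  simp only [sz] at hs'
  refine Nat.card_le_card_of_injective
    (fun π : {π // Av312 n (fun y => b y.succ - 1) π ∧ Shape (word π) (app A B)} =>
      (⟨ins ⟨A.sz, by omega⟩ π.1, av_ins hb hs rfl π.2.1 π.2.2,
        shape_ins _ _ rfl (by omega) π.2.2⟩ :
        {π // Av312 (n + 1) b π ∧ Shape (word π) (node A B)})) ?_
  rintro ⟨x, hx⟩ ⟨y, hy⟩ e
  exact Subtype.ext (ins_inj (Subtype.ext_iff.1 e)).2

/-- Every history is realized by a `312`-avoiding transversal; the induction runs backwards along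
the boundary path, with `RS_cnt` for a column and `cnt_delete` for a row. -/
theorem gct_le_cnt (n : ℕ) (b : Fin n → ℕ) (hb : Proper n b) (F : Forest) (hFn : F.sz ≤ n)
    (hF : ∀ h : 0 < n, F.sz ≤ b ⟨0, h⟩) : gct n b F ≤ cnt n b F := by
  induction n generalizing F with
  | zero =>
    cases F with
    | nil =>
      have : Nonempty {π : Perm (Fin 0) // Av312 0 b π ∧ Shape (word π) nil} :=
        ⟨⟨1, ⟨fun i => i.elim0, fun i => i.elim0⟩, trivial⟩⟩
      exact Nat.card_pos
    | node L R => simp [sz] at hFn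
  | succ n ih =>
    have hF0 : F.sz ≤ b 0 := hF (Nat.succ_pos n)
    have h0 := hb.2 0
    have key : ∀ (c : ℕ) (F : Forest), F.sz + c = b 0 →
        RI c (DS (gct n fun y => b y.succ - 1)) F ≤ cnt (n + 1) b F := by
      intro c
      induction c with
      | zero =>
        intro F hc
        cases F with
        | nil => exact Nat.zero_le _
        | node A B =>
          refine le_trans (ih _ hb.tail (app A B) ?_ fun h => ?_) (cnt_delete hb hc)
          · rw [sz_app]; simp only [sz] at hc; omega
          · have : b 0 ≤ b (Fin.succ ⟨0, h⟩) := hb.1 (Fin.zero_le _)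
            rw [sz_app]; simp only [sz] at hc; omega
      | succ c ihc =>
        intro F hc
        exact le_trans (RS_le F fun G hG => ihc G (by omega)) (RS_cnt _ _ _)
    exact key _ F (by omega)

/-! ### Pattern containment in terms of triples of columns -/

/-- An occurrence of `321` lies in the diagram automatically: its corner is in the row and the column
of its last dot. -/
theorem good_of_avoids {n : ℕ} {b : Fin n → ℕ} (hb : Proper n b) {π : Perm (Fin n)}
    (ht : IsTransversal b π) (h : ¬ ContainsIn b π p321) : Good n b 0 π := by
  refine ⟨ht, fun i k l hik hkl h1 h2 => h ?_, fun i k _ hk => absurd hk (by omega)⟩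
  have hl := ht l
  have hmin : ∀ y, π l ≤ y → (l : ℕ) + 1 ≤ b y := fun y hy => hl.trans (hb.1 hy)
  have hi : (i : ℕ) < k := hik
  have hk : (k : ℕ) < l := hkl
  refine ⟨![i, k, l], ?_, ?_, ?_⟩
  · intro s t hst
    fin_cases s <;> fin_cases t <;> simp_all
    exact hik.trans hkl
  · intro s t
    have h3 := h1.trans h2
    fin_cases s <;> fin_cases t <;> simp [p321, h1, h2, h3, h1.le, h2.le, h3.le]
  · have hcol : ∀ s : Fin 3, ((![i, k, l] s : Fin n) : ℕ) ≤ l := by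
      intro s; fin_cases s <;> simp <;> omega
    have hrow : ∀ t : Fin 3, π l ≤ π (![i, k, l] t) := by
      intro t; fin_cases t <;> simp [h1.le, (h1.trans h2).le]
    intro s t
    have a1 := hcol s
    have a2 := hmin _ (hrow t)
    omega

theorem avoids_of_av312 {n : ℕ} {b : Fin n → ℕ} {π : Perm (Fin n)} (h : Av312 n b π) :
    ¬ ContainsIn b π p312 := by
  rintro ⟨f, hf, hτ, hc⟩
  exact h.2 (f 0) (f 1) (f 2) (hf (by decide)) (hf (by decide)) ((hτ 1 2).1 (by decide))
    ((hτ 2 0).1 (by decide)) (hc 2 1)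

end Shape312

theorem stmt13 (n : ℕ) (b : Fin n → ℕ) (hmono : Monotone b)
    (hb : ∀ y : Fin n, (y : ℕ) + 1 ≤ b y ∧ b y ≤ n) :
    SYcard b p321 ≤ SYcard b p312 := by
  have hP : Shape312.Proper n b := ⟨hmono, hb⟩
  calc SYcard b p321 ≤ Nat.card {π // Shape312.Good n b 0 π} := by
        refine Nat.card_le_card_of_injective
          (fun π : {π : Perm (Fin n) // IsTransversal b π ∧ ¬ ContainsIn b π p321} =>
            (⟨π.1, Shape312.good_of_avoids hP π.2.1 π.2.2⟩ :
              {π // Shape312.Good n b 0 π})) ?_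
        rintro ⟨x, hx⟩ ⟨y, hy⟩ e
        have e' := Subtype.ext_iff.1 e
        exact Subtype.ext e'
    _ ≤ Shape312.gct n b .nil :=
        Shape312.card_good_le n b hP 0 fun _ => Nat.zero_le _
    _ ≤ Shape312.cnt n b .nil :=
        Shape312.gct_le_cnt n b hP .nil (Nat.zero_le _) fun _ => Nat.zero_le _
    _ ≤ SYcard b p312 := by
        refine Nat.card_le_card_of_injective
          (fun π : {π // Shape312.Av312 n b π ∧ Shape312.Shape (Shape312.word π) .nil} =>
            (⟨π.1, π.2.1.1, Shape312.avoids_of_av312 π.2.1⟩ :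
              {π : Perm (Fin n) // IsTransversal b π ∧ ¬ ContainsIn b π p312})) ?_
        rintro ⟨x, hx⟩ ⟨y, hy⟩ e
        have e' := Subtype.ext_iff.1 e
        exact Subtype.ext e'
end

section
/- For every n ≥ 2, |S_{Y_n}(213)| = c_n − c_{n−2}. -/
/-!
Write a transversal of `Y_n` as a permutation `π` with `π last ≠ 0`. Avoiding `213` in `Y_n` means
that every occurrence of `213` in `π` uses the value `0` as its middle entry and the last column as
its last entry. Let `A n` be the number of `213`-avoiders of length `n`, and sort by the position
`p` of the value `0`.

* Deleting the value `0` (`good_insertZero`) turns the `213`-avoiders of length `n + 1` with `0` at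
  position `p` into the `213`-avoiders of length `n` whose first `p` entries all exceed the others.
  These are the block sums of an avoider of length `p` with an avoider of length `n - p`
  (`exists_blockSum`, `good_blockSum`), so there are `A p * A (n - p)` of them
  (`card_good_zero_at`), and `A n = catalan n` follows from the Catalan recursion.
* With `n = m + 2`: if `p < m`, avoidance in `Y_n` coincides with ordinary avoidance
  (`goodY_iff_good`): an occurrence `i < p < last` would produce, with the column `m` strictly
  between `p` and `last`, a forbidden occurrence. If `p = m`, deleting `0` is a bijection onto all
  avoiders of length `m + 1` (`goodY_insertZero`). If `p = m + 1`, there is no transversal.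

Comparing with `A (m + 2) = ∑ p, A p * A (m + 1 - p)`, the term `p = m` changes from `A m` to
`A (m + 1)` and the term `p = m + 1` from `A (m + 1)` to `0`, a net loss of `catalan m`.
-/

open Equiv

/-- The Young diagram `Y_n`: the square `M_n` minus its bottom-right cell. -/
def bYn (n : ℕ) : Fin n → ℕ := fun y => if (y : ℕ) = 0 then n - 1 else n

/-- `π` avoids the pattern `213`. -/
def Good {n : ℕ} (π : Equiv.Perm (Fin n)) : Prop :=
  ∀ i j k : Fin n, i < j → j < k → π j < π i → ¬ π i < π k

/-- `π` is a `213`-avoiding transversal of `Y_{n+1}`: the cell of `0` in the last column is not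
used, and every occurrence of `213` has middle value `0` and ends in the last column. -/
def GoodY {n : ℕ} (π : Equiv.Perm (Fin (n + 1))) : Prop :=
  π (Fin.last n) ≠ 0 ∧ ∀ i j k : Fin (n + 1), i < j → j < k → π j < π i → π i < π k →
    k = Fin.last n ∧ π j = 0

/-- The number of `213`-avoiding permutations of length `n`. -/
noncomputable def goodCard (n : ℕ) : ℕ := Nat.card {π : Equiv.Perm (Fin n) // Good π}

lemma transversal_avoid_iff {n : ℕ} (π : Equiv.Perm (Fin (n + 1))) :
    (IsTransversal (bYn (n + 1)) π ∧ ¬ ContainsIn (bYn (n + 1)) π p213) ↔ GoodY π := by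
  have hb : ∀ x y : Fin (n + 1),
      (x : ℕ) + 1 ≤ bYn (n + 1) y ↔ ¬ (x = Fin.last n ∧ y = 0) := by
    intro x y
    have := x.2
    simp only [bYn, Fin.ext_iff, Fin.val_last, Fin.val_zero]
    split_ifs <;> omega
  unfold GoodY IsTransversal ContainsIn
  simp only [hb]
  constructor
  · rintro ⟨h1, h2⟩
    refine ⟨fun h => h1 (Fin.last n) ⟨rfl, h⟩, ?_⟩
    intro i j k hij hjk hji hik
    by_contra hcon
    apply h2
    refine ⟨![i, j, k], ?_, ?_, ?_⟩
    · intro s t hst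
      fin_cases s <;> fin_cases t <;> simp_all
      exact hij.trans hjk
    · intro s t
      have := hji.trans hik
      fin_cases s <;> fin_cases t <;> simp_all [p213, le_of_lt]
    · have hlast : ∀ x y : Fin (n + 1), x < y → x ≠ Fin.last n := fun x y h =>
        ((h.trans_le (Fin.le_last y)).ne)
      have hzero : ∀ x y : Fin (n + 1), x < y → y ≠ 0 := fun x y h =>
        ((Fin.zero_le x).trans_lt h).ne'
      have a1 := hlast i j hij
      have a2 := hlast j k hjk
      have a3 := hzero _ _ hji
      have a4 := hzero _ _ hik
      clear h1 h2 hb hlast hzero hij hjk hji hik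
      simpa [Fin.forall_fin_succ, a1, a2, a3, a4] using hcon
  · rintro ⟨h1, h2⟩
    refine ⟨?_, ?_⟩
    · rintro i ⟨rfl, h⟩
      exact h1 h
    · rintro ⟨f, hf, hp, hY⟩
      refine hY 2 1 (h2 (f 0) (f 1) (f 2) (hf (by decide)) (hf (by decide)) ?_ ?_)
      · exact (hp 1 0).1 (by decide)
      · exact (hp 0 2).1 (by decide)

/-! ### Deleting the smallest value -/

/-- The permutation of length `n + 1` obtained from `σ` by inserting a new smallest value at
position `p`. -/
def insertZero {n : ℕ} (p : Fin (n + 1)) (σ : Equiv.Perm (Fin n)) : Equiv.Perm (Fin (n + 1)) :=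
  ((finSuccEquiv' p).trans (Equiv.optionCongr σ)).trans (finSuccEquiv' 0).symm

lemma insertZero_self {n : ℕ} (p : Fin (n + 1)) (σ : Equiv.Perm (Fin n)) :
    insertZero p σ p = 0 := by
  simp [insertZero]

lemma insertZero_succAbove {n : ℕ} (p : Fin (n + 1)) (σ : Equiv.Perm (Fin n)) (i : Fin n) :
    insertZero p σ (p.succAbove i) = (σ i).succ := by
  simp [insertZero]

lemma insertZero_injective {n : ℕ} (p : Fin (n + 1)) :
    Function.Injective (insertZero p) := by
  intro σ τ h
  ext i : 1
  have := congrArg (fun π : Equiv.Perm (Fin (n + 1)) => π (p.succAbove i)) h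
  simpa [insertZero_succAbove] using this

lemma exists_insertZero {n : ℕ} (p : Fin (n + 1)) (π : Equiv.Perm (Fin (n + 1)))
    (h : π p = 0) : ∃ σ, insertZero p σ = π := by
  have hne : ∀ i, π (p.succAbove i) ≠ 0 := by
    intro i hi
    rw [← h] at hi
    exact Fin.succAbove_ne p i (π.injective hi)
  have hinj : Function.Injective fun i => (π (p.succAbove i)).pred (hne i) := by
    intro i j hij
    simpa [Fin.pred_inj] using hij
  refine ⟨Equiv.ofBijective _ (Finite.injective_iff_bijective.1 hinj), ?_⟩
  ext x : 1
  rcases Fin.eq_self_or_eq_succAbove p x with rfl | ⟨i, rfl⟩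
  · rw [insertZero_self, h]
  · rw [insertZero_succAbove]
    simp

/-- Deleting the value `0` at position `p` is a bijection, so it transports counts. -/
lemma card_zero_at {n : ℕ} (p : Fin (n + 1)) (P : Equiv.Perm (Fin (n + 1)) → Prop)
    (Q : Equiv.Perm (Fin n) → Prop) (h : ∀ σ, P (insertZero p σ) ↔ Q σ) :
    Nat.card {π : Equiv.Perm (Fin (n + 1)) // P π ∧ π p = 0} = Nat.card {σ // Q σ} := by
  symm
  refine Nat.card_congr (Equiv.ofBijective
    (fun σ => ⟨insertZero p σ.1, (h σ.1).2 σ.2, insertZero_self p σ.1⟩) ⟨?_, ?_⟩)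
  · intro σ τ hst
    exact Subtype.ext (insertZero_injective p (congrArg Subtype.val hst))
  · rintro ⟨π, hP, h0⟩
    obtain ⟨σ, rfl⟩ := exists_insertZero p π h0
    exact ⟨⟨σ, (h σ).1 hP⟩, rfl⟩

/-- Counting permutations by the position of the value `0`. -/
lemma card_eq_sum_zero_at {n : ℕ} (P : Equiv.Perm (Fin (n + 1)) → Prop) :
    Nat.card {π // P π} = ∑ p : Fin (n + 1), Nat.card {π // P π ∧ π p = 0} := by
  rw [← Nat.card_sigma]
  refine Nat.card_congr (Equiv.ofBijective
    (fun π => ⟨π.1.symm 0, π.1, π.2, by simp⟩) ⟨?_, ?_⟩)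
  · intro π ρ h
    have := congrArg (fun x : (Σ p : Fin (n + 1), {π // P π ∧ π p = 0}) => x.2.1) h
    exact Subtype.ext this
  · rintro ⟨p, π, hP, h0⟩
    have hp : π.symm 0 = p := by rw [← h0]; simp
    subst hp
    exact ⟨⟨π, hP⟩, rfl⟩

lemma good_insertZero {n : ℕ} (p : Fin (n + 1)) (σ : Equiv.Perm (Fin n)) :
    Good (insertZero p σ) ↔
      Good σ ∧ ∀ i j : Fin n, (i : ℕ) < p → (p : ℕ) ≤ j → σ j < σ i := by
  constructor
  · intro h
    refine ⟨?_, ?_⟩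
    · intro i j k hij hjk h1 h2
      apply h (p.succAbove i) (p.succAbove j) (p.succAbove k)
      all_goals simpa [insertZero_succAbove]
    · intro i j hi hj
      have hi' : p.succAbove i < p := Fin.succAbove_lt_iff_castSucc_lt p i |>.2 hi
      have hj' : p < p.succAbove j := Fin.lt_succAbove_iff_le_castSucc p j |>.2 hj
      have := h _ _ _ hi' hj'
      simp only [insertZero_self, insertZero_succAbove, Fin.succ_pos, Fin.succ_lt_succ_iff,
        not_lt, forall_const] at this
      refine lt_of_le_of_ne this fun he => ?_
      have := σ.injective he
      subst this
      omega
  · rintro ⟨h1, h2⟩ i j k hij hjk hji hik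
    rcases Fin.eq_self_or_eq_succAbove p i with rfl | ⟨i, rfl⟩
    · simp [insertZero_self] at hji
    rcases Fin.eq_self_or_eq_succAbove p k with rfl | ⟨k, rfl⟩
    · simp [insertZero_self] at hik
    simp only [insertZero_succAbove, Fin.succ_lt_succ_iff] at hik
    rcases Fin.eq_self_or_eq_succAbove p j with rfl | ⟨j, rfl⟩
    · exact lt_asymm hik (h2 i k (Fin.succAbove_lt_iff_castSucc_lt _ i |>.1 hij)
        (Fin.lt_succAbove_iff_le_castSucc _ k |>.1 hjk))
    · simp only [insertZero_succAbove, Fin.succ_lt_succ_iff,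
        Fin.succAbove_lt_succAbove_iff] at *
      exact h1 i j k hij hjk hji hik

/-! ### Block sums -/

lemma blockSum_castAdd {a b : ℕ} (σ : Equiv.Perm (Fin a)) (τ : Equiv.Perm (Fin b)) (i : Fin a) :
    (blockSum σ τ (Fin.castAdd b i) : ℕ) = b + σ i := by
  simp [blockSum, Nat.add_comm]

lemma blockSum_natAdd {a b : ℕ} (σ : Equiv.Perm (Fin a)) (τ : Equiv.Perm (Fin b)) (j : Fin b) :
    (blockSum σ τ (Fin.natAdd a j) : ℕ) = τ j := by
  simp [blockSum]

/-- The first `a` entries of `π` all exceed the remaining ones. -/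
def Separated (a : ℕ) {n : ℕ} (π : Equiv.Perm (Fin n)) : Prop :=
  ∀ i j : Fin n, (i : ℕ) < a → a ≤ (j : ℕ) → π j < π i

lemma blockSum_separated {a b : ℕ} (σ : Equiv.Perm (Fin a)) (τ : Equiv.Perm (Fin b)) :
    Separated a (blockSum σ τ) := by
  intro i j hi hj
  induction i using Fin.addCases with
  | right i => simp at hi
  | left i =>
    induction j using Fin.addCases with
    | left j => have := j.2; simp at hj; omega
    | right j =>
      rw [Fin.lt_def, blockSum_castAdd, blockSum_natAdd]
      have := (τ j).2
      omega

lemma good_blockSum {a b : ℕ} (σ : Equiv.Perm (Fin a)) (τ : Equiv.Perm (Fin b)) :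
    Good (blockSum σ τ) ↔ Good σ ∧ Good τ := by
  constructor
  · intro h
    refine ⟨?_, ?_⟩
    · intro i j k hij hjk h1 h2
      apply h (Fin.castAdd b i) (Fin.castAdd b j) (Fin.castAdd b k)
      all_goals simp only [Fin.lt_def, blockSum_castAdd, Fin.val_castAdd] at *
      all_goals omega
    · intro i j k hij hjk h1 h2
      apply h (Fin.natAdd a i) (Fin.natAdd a j) (Fin.natAdd a k)
      all_goals simp only [Fin.lt_def, blockSum_natAdd, Fin.val_natAdd] at *
      all_goals omega
  · rintro ⟨hσ, hτ⟩ i j k hij hjk h1 h2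
    have hsep := blockSum_separated σ τ
    by_cases hia : (i : ℕ) < a
    · by_cases hka : (k : ℕ) < a
      · obtain ⟨i, rfl⟩ : ∃ i', i = Fin.castAdd b i' := ⟨⟨i, hia⟩, rfl⟩
        obtain ⟨k, rfl⟩ : ∃ k', k = Fin.castAdd b k' := ⟨⟨k, hka⟩, rfl⟩
        obtain ⟨j, rfl⟩ : ∃ j', j = Fin.castAdd b j' := ⟨⟨j, lt_trans hjk hka⟩, rfl⟩
        simp only [Fin.lt_def, blockSum_castAdd, Fin.val_castAdd] at *
        exact hσ i j k hij hjk (by rw [Fin.lt_def]; omega) (by rw [Fin.lt_def]; omega)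
      · exact lt_asymm h2 (hsep i k hia (not_lt.1 hka))
    · have hja : a ≤ (j : ℕ) := by rw [Fin.lt_def] at hij; omega
      have hka : a ≤ (k : ℕ) := by rw [Fin.lt_def] at hjk; omega
      have lift : ∀ x : Fin (a + b), a ≤ (x : ℕ) → ∃ y, x = Fin.natAdd a y := fun x hx =>
        ⟨⟨x - a, by have := x.2; omega⟩, by ext; simp; omega⟩
      obtain ⟨i, rfl⟩ := lift i (not_lt.1 hia)
      obtain ⟨j, rfl⟩ := lift j hja
      obtain ⟨k, rfl⟩ := lift k hka
      simp only [Fin.lt_def, blockSum_natAdd, Fin.val_natAdd] at *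
      exact hτ i j k (by rw [Fin.lt_def]; omega) (by rw [Fin.lt_def]; omega) h1 h2

lemma exists_blockSum {a b : ℕ} (π : Equiv.Perm (Fin (a + b))) (h : Separated a π) :
    ∃ σ τ, blockSum σ τ = π := by
  -- The `b` later values lie below each of the first `a` values, and vice versa.
  have hlow : ∀ i : Fin a, b ≤ (π (Fin.castAdd b i) : ℕ) := by
    intro i
    have := Finset.card_le_card_of_injOn (s := (Finset.univ : Finset (Fin b)))
      (t := Finset.Iio (π (Fin.castAdd b i))) (fun j => π (Fin.natAdd a j))
      (by intro j _; simpa using h _ _ (by simp) (by simp))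
      (by intro x _ y _ hxy; simpa using hxy)
    simpa using this
  have hhigh : ∀ j : Fin b, (π (Fin.natAdd a j) : ℕ) < b := by
    intro j
    have := Finset.card_le_card_of_injOn (s := (Finset.univ : Finset (Fin a)))
      (t := Finset.Ioi (π (Fin.natAdd a j))) (fun i => π (Fin.castAdd b i))
      (by intro i _; simpa using h _ _ (by simp) (by simp))
      (by intro x _ y _ hxy; simpa using hxy)
    have hj := (π (Fin.natAdd a j)).2
    have hj' := j.2
    simp at this
    omega
  have hσ : Function.Injective fun i : Fin a =>
      (⟨π (Fin.castAdd b i) - b, by have := (π (Fin.castAdd b i)).2; have := i.2; omega⟩ :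
        Fin a) := by
    intro x y hxy
    have hx := hlow x
    have hy := hlow y
    simp only [Fin.mk.injEq] at hxy
    have : π (Fin.castAdd b x) = π (Fin.castAdd b y) := Fin.ext (by omega)
    simpa using this
  have hτ : Function.Injective fun j : Fin b =>
      (⟨π (Fin.natAdd a j), hhigh j⟩ : Fin b) := by
    intro x y hxy
    simp only [Fin.mk.injEq] at hxy
    simpa using Fin.ext hxy
  refine ⟨Equiv.ofBijective _ (Finite.injective_iff_bijective.1 hσ),
    Equiv.ofBijective _ (Finite.injective_iff_bijective.1 hτ), ?_⟩
  ext x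
  induction x using Fin.addCases with
  | left i =>
    have := hlow i
    rw [blockSum_castAdd]
    simp
    omega
  | right j =>
    rw [blockSum_natAdd]
    simp

lemma blockSum_injective {a b : ℕ} {σ σ' : Equiv.Perm (Fin a)} {τ τ' : Equiv.Perm (Fin b)}
    (h : blockSum σ τ = blockSum σ' τ') : σ = σ' ∧ τ = τ' := by
  constructor
  · ext i
    have := congrArg (fun π : Equiv.Perm (Fin (a + b)) => (π (Fin.castAdd b i) : ℕ)) h
    simpa [blockSum_castAdd] using this
  · ext j
    have := congrArg (fun π : Equiv.Perm (Fin (a + b)) => (π (Fin.natAdd a j) : ℕ)) h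
    simpa [blockSum_natAdd] using this

lemma card_good_separated (a b : ℕ) :
    Nat.card {π : Equiv.Perm (Fin (a + b)) // Good π ∧ Separated a π} =
      goodCard a * goodCard b := by
  unfold goodCard
  rw [← Nat.card_prod]
  symm
  refine Nat.card_congr (Equiv.ofBijective
    (fun x => ⟨blockSum x.1.1 x.2.1, (good_blockSum _ _).2 ⟨x.1.2, x.2.2⟩,
      blockSum_separated _ _⟩) ⟨?_, ?_⟩)
  · rintro ⟨⟨σ, hσ⟩, ⟨τ, hτ⟩⟩ ⟨⟨σ', hσ'⟩, ⟨τ', hτ'⟩⟩ h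
    obtain ⟨rfl, rfl⟩ := blockSum_injective (congrArg Subtype.val h)
    rfl
  · rintro ⟨π, hg, hs⟩
    obtain ⟨σ, τ, rfl⟩ := exists_blockSum π hs
    exact ⟨⟨⟨σ, ((good_blockSum _ _).1 hg).1⟩, ⟨τ, ((good_blockSum _ _).1 hg).2⟩⟩, rfl⟩

lemma card_good_zero_at {n : ℕ} (p : Fin (n + 1)) :
    Nat.card {π : Equiv.Perm (Fin (n + 1)) // Good π ∧ π p = 0} =
      goodCard p * goodCard (n - p) := by
  rw [card_zero_at p _ _ (good_insertZero p)]
  obtain ⟨p, hp⟩ := p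
  obtain ⟨b, rfl⟩ := Nat.exists_eq_add_of_le (Nat.lt_succ_iff.1 hp)
  simpa [Separated] using card_good_separated p b

lemma goodCard_eq_catalan (n : ℕ) : goodCard n = catalan n := by
  induction n using Nat.strong_induction_on with
  | _ n ih =>
    cases n with
    | zero =>
      have : Unique {π : Equiv.Perm (Fin 0) // Good π} :=
        { default := ⟨1, fun i => i.elim0⟩
          uniq := fun x => Subtype.ext (Subsingleton.elim _ _) }
      simp [goodCard]
    | succ n =>
      rw [catalan_succ, goodCard, card_eq_sum_zero_at]
      refine Finset.sum_congr rfl fun p _ => ?_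
      rw [card_good_zero_at, ih _ p.2, ih _ (by omega)]

/-! ### Avoidance in the diagram with a missing corner -/

lemma goodY_iff_good {m : ℕ} (π : Equiv.Perm (Fin (m + 2))) (p : Fin (m + 2))
    (hp : (p : ℕ) < m) (h0 : π p = 0) : GoodY π ↔ Good π := by
  constructor
  · rintro ⟨-, h⟩ i j k hij hjk hji hik
    obtain ⟨rfl, hj0⟩ := h i j k hij hjk hji hik
    obtain rfl : j = p := π.injective (hj0.trans h0.symm)
    -- The column `m` lies strictly between `p` and the last column.
    let q : Fin (m + 2) := ⟨m, by omega⟩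
    have hjq : j < q := hp
    have hql : q < Fin.last (m + 1) := by simp [q, Fin.lt_def]
    rcases lt_trichotomy (π i) (π q) with hlt | heq | hgt
    · exact hql.ne (h i j q hij hjq hji hlt).1
    · exact (hij.trans hjq).ne (π.injective heq)
    · have := (h i q _ (hij.trans hjq) hql hgt hik).2
      exact hjq.ne' (π.injective (this.trans h0.symm))
  · intro h
    refine ⟨fun hl => ?_, fun i j k hij hjk hji hik => (h i j k hij hjk hji hik).elim⟩
    have := π.injective (hl.trans h0.symm)
    rw [← this] at hp
    simp at hp

lemma goodY_insertZero {m : ℕ} (σ : Equiv.Perm (Fin (m + 1))) :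
    GoodY (insertZero (Fin.last m).castSucc σ) ↔ Good σ := by
  set p : Fin (m + 2) := (Fin.last m).castSucc with hp
  constructor
  · rintro ⟨-, h⟩ i j k hij hjk hji hik
    have := (h (p.succAbove i) (p.succAbove j) (p.succAbove k)
      (by simpa) (by simpa) (by simpa [insertZero_succAbove])
      (by simpa [insertZero_succAbove])).2
    simp [insertZero_succAbove] at this
  · intro h
    refine ⟨fun hl => ?_, ?_⟩
    · have := (insertZero p σ).injective (hl.trans (insertZero_self p σ).symm)
      simp [hp, Fin.ext_iff] at this
    · intro i j k hij hjk hji hik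
      rcases Fin.eq_self_or_eq_succAbove p j with rfl | ⟨j, rfl⟩
      · refine ⟨?_, insertZero_self _ _⟩
        have := k.2
        simp only [hp, Fin.lt_def, Fin.ext_iff, Fin.val_castSucc, Fin.val_last] at *
        omega
      rcases Fin.eq_self_or_eq_succAbove p i with rfl | ⟨i, rfl⟩
      · simp [insertZero_self] at hji
      rcases Fin.eq_self_or_eq_succAbove p k with rfl | ⟨k, rfl⟩
      · simp [insertZero_self] at hik
      simp only [insertZero_succAbove, Fin.succ_lt_succ_iff,
        Fin.succAbove_lt_succAbove_iff] at hij hjk hji hik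
      exact (h i j k hij hjk hji hik).elim

theorem stmt15 (n : ℕ) (hn : 2 ≤ n) :
    SYcard (bYn n) p213 = catalan n - catalan (n - 2) := by
  obtain ⟨m, rfl⟩ := Nat.exists_eq_add_of_le' hn
  have hY : SYcard (bYn (m + 2)) p213 = Nat.card {π : Equiv.Perm (Fin (m + 2)) // GoodY π} :=
    Nat.card_congr (Equiv.subtypeEquivRight transversal_avoid_iff)
  have hA : catalan (m + 2) = ∑ p : Fin (m + 2), Nat.card
      {π : Equiv.Perm (Fin (m + 2)) // Good π ∧ π p = 0} := by
    rw [← goodCard_eq_catalan, goodCard, card_eq_sum_zero_at]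
  have hinner : ∀ q : Fin m,
      Nat.card {π : Equiv.Perm (Fin (m + 2)) // GoodY π ∧ π q.castSucc.castSucc = 0} =
      Nat.card {π : Equiv.Perm (Fin (m + 2)) // Good π ∧ π q.castSucc.castSucc = 0} :=
    fun q => Nat.card_congr (Equiv.subtypeEquivRight fun π =>
      and_congr_left fun h0 => goodY_iff_good π _ (by simp) h0)
  have hm : Nat.card {π : Equiv.Perm (Fin (m + 2)) // GoodY π ∧ π (Fin.last m).castSucc = 0} =
      catalan (m + 1) := by
    rw [card_zero_at _ _ _ goodY_insertZero, ← goodCard_eq_catalan, goodCard]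
  have hlast : Nat.card {π : Equiv.Perm (Fin (m + 2)) // GoodY π ∧ π (Fin.last (m + 1)) = 0} =
      0 := by
    have : IsEmpty {π : Equiv.Perm (Fin (m + 2)) // GoodY π ∧ π (Fin.last (m + 1)) = 0} :=
      ⟨fun π => π.2.1.1 π.2.2⟩
    exact Nat.card_of_isEmpty
  rw [hY, card_eq_sum_zero_at, hA, Fin.sum_univ_castSucc, Fin.sum_univ_castSucc, hm, hlast,
    Fin.sum_univ_castSucc (n := m + 1), Fin.sum_univ_castSucc (n := m), card_good_zero_at,
    card_good_zero_at, Finset.sum_congr rfl fun q _ => hinner q]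
  simp [goodCard_eq_catalan]
  omega
end
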